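/- Let $m \geq 1$ and let $\mathbf{k} = (k_1, \ldots, k_s)$ be a sequence of positive integers with $k_i \leq m$ for each $i$, and set $k = \sum_{i=1}^s k_i$. Let $W_{m,\mathbf{k}}$ be the set of tuples $(A_1, \ldots, A_s)$ of complex matrices, with $A_i$ of size $m \times (m-k_i+1)$, such that for at least one index $i$ the matrix $A_i$ has full rank $m - k_i + 1$, regarded as a topological subspace of the product of the matrix spaces with the Euclidean topology. Then the homotopy group $\pi_{2k-1}$ of $W_{m,\mathbf{k}}$ at any basepoint is isomorphic to the group of integers $\mathbb{Z}$. -/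

import Mathlib

section Part1
open scoped unitInterval Topology Topology.Homotopy

namespace TS

section Basics

variable {X Y : Type*} [TopologicalSpace X] [TopologicalSpace Y]

/-- Building a homotopy of generalized loops from a function. -/
theorem homotopic_mk {n : ℕ} {x : X} (f g : GenLoop (Fin n) X x)
    (H : I × (Fin n → I) → X) (hc : Continuous H)
    (h0 : ∀ y, H (0, y) = f y) (h1 : ∀ y, H (1, y) = g y)
    (hb : ∀ t, ∀ y ∈ Cube.boundary (Fin n), H (t, y) = x) : GenLoop.Homotopic f g := by
  refine ⟨⟨⟨⟨H, hc⟩, fun y => h0 y, fun y => h1 y⟩, ?_⟩⟩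
  intro t y hy
  exact (hb t y hy).trans (f.2 y hy).symm

/-- Extracting a function from a homotopy of generalized loops. -/
theorem homotopic_elim {n : ℕ} {x : X} {f g : GenLoop (Fin n) X x}
    (h : GenLoop.Homotopic f g) : ∃ H : I × (Fin n → I) → X, Continuous H ∧
    (∀ y, H (0, y) = f y) ∧ (∀ y, H (1, y) = g y) ∧
    (∀ t, ∀ y ∈ Cube.boundary (Fin n), H (t, y) = x) := by
  obtain ⟨H⟩ := h
  refine ⟨H, H.continuous, fun y => H.apply_zero y, fun y => H.apply_one y, ?_⟩
  intro t y hy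
  exact (H.eq_fst t hy).trans (f.2 y hy)

/-- Version for subsets. -/
theorem homotopic_sub {n : ℕ} {S : Set X} {x : S} (f g : GenLoop (Fin n) S x)
    (H : I × (Fin n → I) → X) (hc : Continuous H) (hm : ∀ p, H p ∈ S)
    (h0 : ∀ y, H (0, y) = f y) (h1 : ∀ y, H (1, y) = g y)
    (hb : ∀ t, ∀ y ∈ Cube.boundary (Fin n), H (t, y) = x) : GenLoop.Homotopic f g :=
  homotopic_mk f g (fun p => ⟨H p, hm p⟩) (hc.subtype_mk _) (fun y => Subtype.ext (h0 y))
    (fun y => Subtype.ext (h1 y)) (fun t y hy => Subtype.ext (hb t y hy))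

/-- Version for subsets. -/
theorem homotopic_sub_elim {n : ℕ} {S : Set X} {x : S} {f g : GenLoop (Fin n) S x}
    (h : GenLoop.Homotopic f g) : ∃ H : I × (Fin n → I) → X, Continuous H ∧
    (∀ p, H p ∈ S) ∧
    (∀ y, H (0, y) = f y) ∧ (∀ y, H (1, y) = g y) ∧
    (∀ t, ∀ y ∈ Cube.boundary (Fin n), H (t, y) = x) := by
  obtain ⟨H, hc, h0, h1, hb⟩ := homotopic_elim h
  refine ⟨fun p => H p, continuous_subtype_val.comp hc, fun p => (H p).2, ?_, ?_, ?_⟩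
  · intro y; exact congrArg Subtype.val (h0 y)
  · intro y; exact congrArg Subtype.val (h1 y)
  · intro t y hy; exact congrArg Subtype.val (hb t y hy)

/-- A generalized loop in a subset. -/
def loopSub {n : ℕ} {S : Set X} {x : S} (f : (Fin n → I) → X) (hc : Continuous f)
    (hm : ∀ y, f y ∈ S) (hb : ∀ y ∈ Cube.boundary (Fin n), f y = x) : GenLoop (Fin n) S x :=
  ⟨⟨fun y => ⟨f y, hm y⟩, hc.subtype_mk _⟩, fun y hy => Subtype.ext (hb y hy)⟩

@[simp] theorem loopSub_apply {n : ℕ} {S : Set X} {x : S} (f : (Fin n → I) → X) (hc : Continuous f)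
    (hm : ∀ y, f y ∈ S) (hb : ∀ y ∈ Cube.boundary (Fin n), f y = x) (y : Fin n → I) :
    ((loopSub f hc hm hb : GenLoop (Fin n) S x) y : X) = f y := rfl

theorem loop_continuous {n : ℕ} {S : Set X} {x : S} (f : GenLoop (Fin n) S x) :
    Continuous (fun y => (f y : X)) := continuous_subtype_val.comp f.1.continuous

theorem loop_bdry {n : ℕ} {S : Set X} {x : S} (f : GenLoop (Fin n) S x) (y)
    (hy : y ∈ Cube.boundary (Fin n)) : (f y : X) = x := by
  have := f.2 y hy
  exact congrArg Subtype.val this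

/-- Image of a loop. -/
def gmap {n : ℕ} {x : X} {y : Y} (φ : X → Y) (hφ : Continuous φ) (h : φ x = y)
    (f : GenLoop (Fin n) X x) : GenLoop (Fin n) Y y :=
  ⟨⟨fun t => φ (f t), hφ.comp f.1.continuous⟩, fun t ht => by
    have := f.2 t ht
    change φ (f.1 t) = y
    rw [this, h]⟩

@[simp] theorem gmap_apply {n : ℕ} {x : X} {y : Y} (φ : X → Y) (hφ : Continuous φ) (h : φ x = y)
    (f : GenLoop (Fin n) X x) (t) : gmap φ hφ h f t = φ (f t) := rfl

theorem gmap_homotopic {n : ℕ} {x : X} {y : Y} (φ : X → Y) (hφ : Continuous φ) (h : φ x = y)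
    {f g : GenLoop (Fin n) X x} (hfg : GenLoop.Homotopic f g) :
    GenLoop.Homotopic (gmap φ hφ h f) (gmap φ hφ h g) := by
  obtain ⟨H, hc, h0, h1, hb⟩ := homotopic_elim hfg
  refine homotopic_mk _ _ (fun p => φ (H p)) (hφ.comp hc) ?_ ?_ ?_
  · intro y; simp [h0]
  · intro y; simp [h1]
  · intro t y hy; simp [hb t y hy, h]

/-- Isomorphism of homotopy groups. -/
def PiIso (a : ℕ) (X : Type*) [TopologicalSpace X] (x : X) (b : ℕ) (Y : Type*)
    [TopologicalSpace Y] (y : Y) : Prop :=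
  Nonempty (HomotopyGroup (Fin (a + 1)) X x ≃* HomotopyGroup (Fin (b + 1)) Y y)

theorem piIso_of {a b : ℕ} {x : X} {y : Y}
    (T : GenLoop (Fin (a + 1)) X x → GenLoop (Fin (b + 1)) Y y)
    (hT : ∀ f g, GenLoop.Homotopic f g → GenLoop.Homotopic (T f) (T g))
    (i : Fin (a + 1)) (i' : Fin (b + 1))
    (hmul : ∀ f g, T (GenLoop.transAt i f g) = GenLoop.transAt i' (T f) (T g))
    (surj : ∀ g, ∃ f, GenLoop.Homotopic (T f) g)
    (inj : ∀ f g, GenLoop.Homotopic (T f) (T g) → GenLoop.Homotopic f g) :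
    PiIso a X x b Y y := by
  let F : HomotopyGroup (Fin (a + 1)) X x → HomotopyGroup (Fin (b + 1)) Y y :=
    Quotient.map T hT
  have hF : Function.Bijective F := by
    constructor
    · intro p q
      induction p using Quotient.inductionOn
      induction q using Quotient.inductionOn
      intro h
      exact Quotient.sound (inj _ _ (Quotient.exact h))
    · intro q
      induction q using Quotient.inductionOn with
      | h g =>
        obtain ⟨f, hf⟩ := surj g
        exact ⟨Quotient.mk _ f, Quotient.sound hf⟩
  refine ⟨MulEquiv.mk (Equiv.ofBijective F hF) ?_⟩
  intro p q
  induction p using Quotient.inductionOn with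
  | h f =>
  induction q using Quotient.inductionOn with
  | h g =>
    have e1 := HomotopyGroup.mul_spec (i := i) (p := f) (q := g)
    have e2 := HomotopyGroup.mul_spec (i := i') (p := T f) (q := T g)
    change F (((· * ·) : _ → _ → HomotopyGroup (Fin (a + 1)) X x) ⟦f⟧ ⟦g⟧) = 
      ((· * ·) : _ → _ → HomotopyGroup (Fin (b + 1)) Y y) ⟦T f⟧ ⟦T g⟧
    rw [e1, e2, ← hmul]
    rfl

theorem PiIso.trans {Z : Type*} [TopologicalSpace Z] {a b c : ℕ} {x : X} {y : Y} {z : Z}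
    (h : PiIso a X x b Y y) (h' : PiIso b Y y c Z z) : PiIso a X x c Z z :=
  ⟨h.some.trans h'.some⟩

theorem PiIso.symm {a b : ℕ} {x : X} {y : Y}
    (h : PiIso a X x b Y y) : PiIso b Y y a X x := ⟨h.some.symm⟩

theorem gmap_trans {n : ℕ} {x : X} {y : Y} (φ : X → Y) (hφ : Continuous φ) (h : φ x = y)
    (i : Fin n) (f g : GenLoop (Fin n) X x) :
    gmap φ hφ h (GenLoop.transAt i f g) =
      GenLoop.transAt i (gmap φ hφ h f) (gmap φ hφ h g) := by
  ext t
  simp only [gmap_apply, GenLoop.transAt, GenLoop.coe_copy]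
  split_ifs <;> rfl

theorem piIso_of_map {a : ℕ} {x : X} {y : Y} (φ : X → Y) (hφ : Continuous φ) (h : φ x = y)
    (surj : ∀ g : GenLoop (Fin (a + 1)) Y y, ∃ f, GenLoop.Homotopic (gmap φ hφ h f) g)
    (inj : ∀ f g : GenLoop (Fin (a + 1)) X x,
      GenLoop.Homotopic (gmap φ hφ h f) (gmap φ hφ h g) → GenLoop.Homotopic f g) :
    PiIso a X x a Y y :=
  piIso_of (gmap φ hφ h) (fun _ _ => gmap_homotopic φ hφ h) 0 0 (gmap_trans φ hφ h 0) surj inj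

theorem piIso_of_homeo {a : ℕ} {x : X} {y : Y} (φ : X ≃ₜ Y) (h : φ x = y) :
    PiIso a X x a Y y := by
  have h' : φ.symm y = x := by rw [← h]; simp
  refine piIso_of_map φ φ.continuous h ?_ ?_
  · intro g
    refine ⟨gmap φ.symm φ.symm.continuous h' g, ?_⟩
    convert GenLoop.Homotopic.refl g
    ext t; simp
  · intro f g hfg
    have := gmap_homotopic φ.symm φ.symm.continuous h' hfg
    convert this <;> (ext t; simp)

end Basics

end TS

end Part1

section Part2
open scoped unitInterval Topology Topology.Homotopy

namespace TS

/-- The fundamental group of the punctured plane. -/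
theorem pi1_punctured (x : ({0}ᶜ : Set ℂ)) :
    Nonempty (HomotopyGroup (Fin (0 + 1)) ({0}ᶜ : Set ℂ) x ≃* Multiplicative ℤ) := by
  have hcov := Complex.isAddQuotientCoveringMap_exp
  let X := {z : ℂ // z ≠ 0}
  let x' : X := ⟨x.1, x.2⟩
  have hx : Complex.exp (Complex.log x.1) = x.1 := Complex.exp_log x.2
  let e : (fun z : ℂ ↦ (⟨Complex.exp z, Complex.exp_ne_zero z⟩ : X)) ⁻¹' {x'} :=
    ⟨Complex.log x.1, Subtype.ext hx⟩
  have f1 := hcov.fundamentalGroupEquiv e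
  have f2 := HomotopyGroup.pi1MulEquivFundamentalGroup (X := X) (x := x')
  have hinj : Function.Injective (zmultiplesHom ℂ (2 * Real.pi * Complex.I)) := by
    intro a b hab
    simpa [Real.pi_ne_zero] using hab
  have f3 : ℤ ≃+ AddSubgroup.zmultiples (2 * Real.pi * Complex.I : ℂ) :=
    (AddMonoidHom.ofInjective hinj).trans (AddEquiv.addSubgroupCongr (by
      ext z; simp [AddSubgroup.mem_zmultiples_iff]))
  have f4 : Multiplicative ℤ ≃* Multiplicative (AddSubgroup.zmultiples (2 * Real.pi * Complex.I : ℂ)) :=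
    AddEquiv.toMultiplicative f3
  have f5 : Multiplicative (AddSubgroup.zmultiples (2 * Real.pi * Complex.I : ℂ)) ≃*
    (Multiplicative (AddSubgroup.zmultiples (2 * Real.pi * Complex.I : ℂ)))ᵐᵒᵖ := MulEquiv.inv' _
  exact ⟨(f2.trans f1).trans (f4.trans f5).symm⟩

end TS

end Part2

section Part3
open scoped unitInterval Topology Topology.Homotopy

set_option linter.unusedSectionVars false

namespace TS

/-- `K` is a retract of the space `P`. -/
structure Ret (K P : Type*) [TopologicalSpace K] [TopologicalSpace P] where
  /-- the embedding -/
  ι : K → P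
  /-- the retraction -/
  ρ : P → K
  cι : Continuous ι
  cρ : Continuous ρ
  h : ∀ x, ρ (ι x) = x

/-- The interval as a retract of the line. -/
noncomputable def Ret.interval : Ret I ℝ where
  ι := fun x => x
  ρ := Set.projIcc 0 1 zero_le_one
  cι := continuous_subtype_val
  cρ := continuous_projIcc
  h := fun x => Set.projIcc_val _ x

/-- The cube as a retract. -/
noncomputable def Ret.cube (n : ℕ) : Ret (Fin n → I) (Fin n → ℝ) where
  ι := fun x i => x i
  ρ := fun x i => Set.projIcc 0 1 zero_le_one (x i)
  cι := by fun_prop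
  cρ := by
    refine continuous_pi fun i => ?_
    exact continuous_projIcc.comp (continuous_apply i)
  h := fun x => by
    ext i
    simp

/-- Products of retracts. -/
def Ret.prod {K P K' P' : Type*} [TopologicalSpace K] [TopologicalSpace P]
    [TopologicalSpace K'] [TopologicalSpace P'] (r : Ret K P) (r' : Ret K' P') :
    Ret (K × K') (P × P') where
  ι := fun x => (r.ι x.1, r'.ι x.2)
  ρ := fun x => (r.ρ x.1, r'.ρ x.2)
  cι := by have := r.cι; have := r'.cι; fun_prop
  cρ := by have := r.cρ; have := r'.cρ; fun_prop
  h := fun x => by simp [r.h, r'.h]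

variable {E : Type*} [NormedAddCommGroup E] [NormedSpace ℝ E] [FiniteDimensional ℝ E]
variable {P : Type*} [NormedAddCommGroup P] [NormedSpace ℝ P] [FiniteDimensional ℝ P]
variable {K : Type*} [TopologicalSpace K]

theorem smooth_approx (r : Ret K P) (f : K → E) (hf : Continuous f) {ε : ℝ} (hε : 0 < ε) :
    ∃ G : P → E, ContDiff ℝ 1 G ∧ ∀ x, ‖G (r.ι x) - f x‖ < ε := by
  obtain ⟨G, hG, h, -⟩ := Continuous.exists_contDiff_approx (E := P) 1 (hf.comp r.cρ)
    (ε := fun _ => ε) continuous_const (fun _ => hε)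
  refine ⟨G, hG, fun x => ?_⟩
  have := h (r.ι x)
  simpa [r.h, dist_eq_norm] using this

theorem exists_small_notMem {S : Set E} (hS : dimH S < Module.finrank ℝ E) {ε : ℝ} (hε : 0 < ε) :
    ∃ v : E, ‖v‖ < ε ∧ v ∉ S := by
  have := dense_compl_of_dimH_lt_finrank hS
  obtain ⟨v, hv, h⟩ := this.exists_dist_lt 0 hε
  exact ⟨v, by simpa using h, hv⟩

/-- A subset covered by countably many `C¹` images of `ℝ^d`. -/
def Thin (D : Set E) (d : ℕ) : Prop :=
  ∃ p : ℕ → (Fin d → ℝ) → E, (∀ i, ContDiff ℝ 1 (p i)) ∧ D ⊆ ⋃ i, Set.range (p i)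

theorem exists_shift (G : P → E) (hG : ContDiff ℝ 1 G) {Z : Set E} {d : ℕ} (hZ : Thin Z d)
    (hd : Module.finrank ℝ P + d < Module.finrank ℝ E) {ε : ℝ} (hε : 0 < ε) :
    ∃ v : E, ‖v‖ < ε ∧ ∀ x, G x + v ∉ Z := by
  obtain ⟨p, hp, hZ⟩ := hZ
  let S : Set E := ⋃ i, Set.range (fun q : P × (Fin d → ℝ) => p i q.2 - G q.1)
  have hS : dimH S < Module.finrank ℝ E := by
    rw [dimH_iUnion]
    refine lt_of_le_of_lt (iSup_le fun i => ?_) (Nat.cast_lt.2 hd)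
    refine (ContDiff.dimH_range_le ?_).trans (b := ((Module.finrank ℝ (P × (Fin d → ℝ)) : ℕ) : ENNReal)) ?_
    · exact ((hp i).comp contDiff_snd).sub (hG.comp contDiff_fst)
    · simp
  obtain ⟨v, hv, h⟩ := exists_small_notMem hS hε
  refine ⟨v, hv, fun x hx => h ?_⟩
  obtain ⟨i, y, hy⟩ := Set.mem_iUnion.1 (hZ hx)
  refine Set.mem_iUnion.2 ⟨i, (x, y), ?_⟩
  simp [hy]

/-- A cut-off function. -/
noncomputable def kap (δ r : ℝ) : ℝ := min 1 (max 0 (r / δ - 1))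

theorem kap_nonneg (δ r : ℝ) : 0 ≤ kap δ r := by simp [kap]
theorem kap_le_one (δ r : ℝ) : kap δ r ≤ 1 := by simp [kap]
theorem kap_eq_zero {δ r : ℝ} (hδ : 0 < δ) (h : r ≤ δ) : kap δ r = 0 := by
  have : r / δ - 1 ≤ 0 := by rw [sub_nonpos, div_le_one hδ]; exact h
  simp [kap, this]
theorem kap_eq_one {δ r : ℝ} (hδ : 0 < δ) (h : 2 * δ ≤ r) : kap δ r = 1 := by
  have : 1 ≤ r / δ - 1 := by rw [le_sub_iff_add_le, le_div_iff₀ hδ]; linarith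
  simp only [kap]; rw [min_eq_left]; exact this.trans (le_max_right _ _)
@[fun_prop] theorem kap_continuous (δ : ℝ) : Continuous (kap δ) := by unfold kap; fun_prop

theorem exists_ball_sub [CompactSpace K] {W : Set E} (hW : IsOpen W) (f : K → E)
    (hf : Continuous f) (h : ∀ x, f x ∈ W) :
    ∃ η > 0, ∀ x v, ‖v - f x‖ < η → v ∈ W := by
  have hc : IsCompact (Set.range f) := isCompact_range hf
  obtain ⟨η, hη, h'⟩ := hc.exists_thickening_subset_open hW (by rintro _ ⟨x, rfl⟩; exact h x)
  refine ⟨η, hη, fun x v hv => h' ?_⟩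
  rw [Metric.mem_thickening_iff]
  exact ⟨f x, ⟨x, rfl⟩, by rwa [dist_eq_norm]⟩

theorem gp_perturb [CompactSpace K] (r : Ret K P) {W W₀ Z : Set E} (hW : IsOpen W)
    (hW₀ : IsOpen W₀) (hZ : W \ W₀ ⊆ Z) {d : ℕ} (hT : Thin Z d)
    (hd : Module.finrank ℝ P + d < Module.finrank ℝ E) {x₀ : E} (hx₀ : x₀ ∈ W₀)
    (f : K → E) (hf : Continuous f) (hfW : ∀ x, f x ∈ W) {ε : ℝ} (hε : 0 < ε) :
    ∃ f' : K → E, Continuous f' ∧ (∀ x, f' x ∈ W₀) ∧ (∀ x, ‖f' x - f x‖ < ε) ∧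
      (∀ x, f x = x₀ → f' x = x₀) ∧
      (∀ x (t : I), f x + (t : ℝ) • (f' x - f x) ∈ W) := by
  obtain ⟨δ', hδ', hB⟩ := Metric.isOpen_iff.1 hW₀ x₀ hx₀
  obtain ⟨η, hη, hηW⟩ := exists_ball_sub hW f hf hfW
  set δ := δ' / 3 with hδ
  have hδ0 : 0 < δ := by positivity
  set e := min (min η δ) ε / 2 with he
  have he0 : 0 < e := by positivity
  have he1 : 2 * e ≤ η := by
    have : min (min η δ) ε ≤ η := (min_le_left _ _).trans (min_le_left _ _)
    linarith
  have he2 : 2 * e ≤ δ := by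
    have : min (min η δ) ε ≤ δ := (min_le_left _ _).trans (min_le_right _ _)
    linarith
  have he3 : 2 * e ≤ ε := by
    have : min (min η δ) ε ≤ ε := (min_le_right _ _)
    linarith
  obtain ⟨G, hG, hGf⟩ := smooth_approx r f hf he0
  obtain ⟨v, hv, hvZ⟩ := exists_shift G hG hT hd he0
  have hGv : ∀ x, ‖G (r.ι x) + v - f x‖ < 2 * e := by
    intro x
    have := norm_add_le (G (r.ι x) - f x) v
    have e1 : G (r.ι x) + v - f x = G (r.ι x) - f x + v := by abel
    rw [e1]; linarith [hGf x]
  let k : K → ℝ := fun x => kap δ ‖f x - x₀‖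
  let f' : K → E := fun x => f x + k x • (G (r.ι x) + v - f x)
  have hsub : ∀ x, f' x - f x = k x • (G (r.ι x) + v - f x) := by intro x; simp [f']
  have hk : ∀ x, ‖f' x - f x‖ < 2 * e := by
    intro x
    rw [hsub, norm_smul, Real.norm_of_nonneg (kap_nonneg _ _)]
    refine lt_of_le_of_lt (mul_le_of_le_one_left (norm_nonneg _) (kap_le_one _ _)) (hGv x)
  have hcι := r.cι
  have hGc := hG.continuous
  refine ⟨f', by fun_prop, ?_, fun x => (hk x).trans_le he3, ?_, ?_⟩
  · intro x
    by_cases hx : 2 * δ ≤ ‖f x - x₀‖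
    · have : f' x = G (r.ι x) + v := by simp [f', k, kap_eq_one hδ0 hx]
      by_contra hn
      refine hvZ (r.ι x) (hZ ?_)
      rw [← this]
      exact ⟨hηW x _ ((hk x).trans_le he1), hn⟩
    · apply hB
      rw [Metric.mem_ball, dist_eq_norm]
      have := norm_add_le (f' x - f x) (f x - x₀)
      rw [sub_add_sub_cancel] at this
      have := hk x
      push Not at hx
      linarith
  · intro x hx
    simp [f', k, hx, kap_eq_zero hδ0 hδ0.le]
  · intro x t
    apply hηW x
    rw [add_sub_cancel_left, norm_smul, Real.norm_of_nonneg t.2.1]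
    exact lt_of_le_of_lt (mul_le_of_le_one_left (norm_nonneg _) t.2.2) ((hk x).trans_le he1)

theorem gp_surj {n : ℕ} {W W₀ Z : Set E} (hW : IsOpen W)
    (hW₀ : IsOpen W₀) (hZ : W \ W₀ ⊆ Z) {d : ℕ} (hT : Thin Z d)
    (hd : n + d < Module.finrank ℝ E) (hsub : W₀ ⊆ W) (x : W₀)
    (f : GenLoop (Fin n) W (Set.inclusion hsub x)) :
    ∃ g : GenLoop (Fin n) W₀ x,
      GenLoop.Homotopic (gmap (Set.inclusion hsub) (continuous_inclusion hsub) rfl g) f := by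
  obtain ⟨f', hc, hm, -, h0, hs⟩ := gp_perturb (Ret.cube n) hW hW₀ hZ hT (by simpa using hd) x.2
    (fun y => (f y : E)) (loop_continuous f) (fun y => (f y).2) one_pos
  refine ⟨loopSub f' hc hm fun y hy => h0 y (loop_bdry f y hy), ?_⟩
  refine GenLoop.Homotopic.symm ?_
  have := loop_continuous f
  refine homotopic_sub _ _ (fun p => (f p.2 : E) + (p.1 : ℝ) • (f' p.2 - f p.2)) (by fun_prop)
    (fun p => hs p.2 p.1) ?_ ?_ ?_
  · intro y; simp
  · intro y; simp
  · intro t y hy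
    have e1 := loop_bdry f y hy
    have e2 := h0 y e1
    simp only [e1, e2]
    simp

theorem gp_inj {n : ℕ} {W W₀ Z : Set E} (hW : IsOpen W)
    (hW₀ : IsOpen W₀) (hZ : W \ W₀ ⊆ Z) {d : ℕ} (hT : Thin Z d)
    (hd : n + 1 + d < Module.finrank ℝ E) (hsub : W₀ ⊆ W) (x : W₀)
    (f g : GenLoop (Fin n) W₀ x)
    (h : GenLoop.Homotopic (gmap (Set.inclusion hsub) (continuous_inclusion hsub) rfl f)
      (gmap (Set.inclusion hsub) (continuous_inclusion hsub) rfl g : GenLoop (Fin n) W _)) :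
    GenLoop.Homotopic f g := by
  obtain ⟨H, hHc, hHm, hH0, hH1, hHb⟩ := homotopic_sub_elim h
  have hfc := loop_continuous f
  have hgc := loop_continuous g
  obtain ⟨η, hη, hηf⟩ := exists_ball_sub hW₀ _ hfc (fun y => (f y).2)
  obtain ⟨η', hη', hηg⟩ := exists_ball_sub hW₀ _ hgc (fun y => (g y).2)
  obtain ⟨H', hc, hm, he, h0, hs⟩ := gp_perturb (Ret.interval.prod (Ret.cube n)) hW hW₀ hZ hT
    (by simp; omega) x.2 H hHc hHm (lt_min hη hη')
  have hb : ∀ t, ∀ y ∈ Cube.boundary (Fin n), H' (t, y) = x := fun t y hy => h0 _ (hHb t y hy)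
  let F : GenLoop (Fin n) W₀ x := loopSub (fun y => H' (0, y)) (by fun_prop) (fun y => hm _)
    (fun y hy => hb 0 y hy)
  let G : GenLoop (Fin n) W₀ x := loopSub (fun y => H' (1, y)) (by fun_prop) (fun y => hm _)
    (fun y hy => hb 1 y hy)
  have h1 : GenLoop.Homotopic f F := by
    refine homotopic_sub _ _ (fun p => (f p.2 : E) + (p.1 : ℝ) • (H' (0, p.2) - f p.2))
      (by fun_prop) ?_ ?_ ?_ ?_
    · intro p
      apply hηf p.2
      rw [add_sub_cancel_left, norm_smul, Real.norm_of_nonneg p.1.2.1]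
      refine lt_of_le_of_lt (mul_le_of_le_one_left (norm_nonneg _) p.1.2.2) ?_
      have := he (0, p.2)
      rw [hH0] at this
      exact this.trans_le (min_le_left _ _)
    · intro y; simp
    · intro y; simp; rfl
    · intro t y hy
      have e1 := loop_bdry f y hy
      simp only [e1, hb 0 y hy]
      simp
  have h2 : GenLoop.Homotopic g G := by
    refine homotopic_sub _ _ (fun p => (g p.2 : E) + (p.1 : ℝ) • (H' (1, p.2) - g p.2))
      (by fun_prop) ?_ ?_ ?_ ?_
    · intro p
      apply hηg p.2
      rw [add_sub_cancel_left, norm_smul, Real.norm_of_nonneg p.1.2.1]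
      refine lt_of_le_of_lt (mul_le_of_le_one_left (norm_nonneg _) p.1.2.2) ?_
      have := he (1, p.2)
      rw [hH1] at this
      exact this.trans_le (min_le_right _ _)
    · intro y; simp
    · intro y; simp; rfl
    · intro t y hy
      have e1 := loop_bdry g y hy
      simp only [e1, hb 1 y hy]
      simp
  have h3 : GenLoop.Homotopic F G :=
    homotopic_sub _ _ H' hc hm (fun y => rfl) (fun y => rfl) hb
  exact (h1.trans h3).trans h2.symm

end TS

end Part3

section Part4
open scoped unitInterval Topology Topology.Homotopy

set_option linter.unusedSectionVars false

namespace TS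

variable {E : Type*} [NormedAddCommGroup E] [NormedSpace ℝ E] [FiniteDimensional ℝ E]
variable {P : Type*} [NormedAddCommGroup P] [NormedSpace ℝ P] [FiniteDimensional ℝ P]
variable {B : Type*} [TopologicalSpace B] [CompactSpace B] [T2Space B]

theorem exists_shift2 (G : P × ℝ → E) (hG : ContDiff ℝ 1 G)
    (hd : Module.finrank ℝ P + 2 < 2 * Module.finrank ℝ E) {ε : ℝ} (hε : 0 < ε) :
    ∃ v w : E, ‖v‖ < ε ∧ ‖w‖ < ε ∧ ∀ b s s', s < s' →
      G (b, s) + v + s • w = 0 → G (b, s') + v + s' • w ≠ 0 := by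
  let U : Set (P × ℝ × ℝ) := {q | q.2.1 < q.2.2}
  let wf : P × ℝ × ℝ → E := fun q => -((q.2.1 - q.2.2)⁻¹ • (G (q.1, q.2.1) - G (q.1, q.2.2)))
  let φ : P × ℝ × ℝ → E × E := fun q => (-(G (q.1, q.2.1) + q.2.1 • wf q), wf q)
  have hU : Convex ℝ U := by
    intro x hx y hy a b ha hb hab
    simp only [U, Set.mem_ofPred_eq, Prod.snd_add, Prod.smul_snd, Prod.fst_add, Prod.smul_fst,
      smul_eq_mul] at *
    rcases ha.eq_or_lt with rfl | ha
    · simp at hab; subst hab; simpa using hy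
    · have := mul_lt_mul_of_pos_left hx ha
      have := mul_le_mul_of_nonneg_left hy.le hb
      linarith
  have hw : ContDiffOn ℝ 1 wf U := by
    have h1 : ContDiff ℝ 1 (fun q : P × ℝ × ℝ => G (q.1, q.2.1) - G (q.1, q.2.2)) := by
      refine (hG.comp ?_).sub (hG.comp ?_) <;> fun_prop
    have h2 : ContDiffOn ℝ 1 (fun q : P × ℝ × ℝ => (q.2.1 - q.2.2)⁻¹) U := by
      refine ContDiffOn.inv (by fun_prop) ?_
      intro q hq
      exact (sub_neg.2 hq).ne
    exact (h2.smul h1.contDiffOn).neg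
  have hφ : ContDiffOn ℝ 1 φ U := by
    refine ContDiffOn.prodMk (ContDiffOn.neg (ContDiffOn.add ?_ (ContDiffOn.smul ?_ hw))) hw
    · refine (hG.comp ?_).contDiffOn
      fun_prop
    · fun_prop
  have hS : dimH (φ '' U) < Module.finrank ℝ (E × E) := by
    refine lt_of_le_of_lt ((hφ.dimH_image_le hU subset_rfl).trans
      ((dimH_mono (Set.subset_univ U)).trans (Real.dimH_univ_eq_finrank _).le)) (Nat.cast_lt.2 ?_)
    simp; omega
  obtain ⟨⟨v, w⟩, hvw, h⟩ := exists_small_notMem hS hε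
  rw [Prod.norm_def, max_lt_iff] at hvw
  refine ⟨v, w, hvw.1, hvw.2, fun b s s' hss h1 h2 => h ⟨(b, s, s'), hss, ?_⟩⟩
  have hne : s - s' ≠ 0 := (sub_neg.2 hss).ne
  have e1 : wf (b, s, s') = w := by
    have : G (b, s) - G (b, s') = -((s - s') • w) := by
      have := congrArg₂ (· - ·) h1 h2
      simp only [sub_self] at this
      rw [sub_smul]
      have h3 : (G (b, s) - G (b, s')) + (s • w - s' • w) = 0 := by rw [← this]; abel
      exact eq_neg_of_add_eq_zero_left h3
    simp only [wf, this, smul_neg, neg_neg, smul_smul, inv_mul_cancel₀ hne, one_smul]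
  simp only [φ, e1, Prod.mk.injEq, and_true]
  rw [neg_eq_iff_add_eq_zero, ← h1]; abel

theorem sep (r : Ret B P) (e : E) (he : e ≠ 0)
    (hd : Module.finrank ℝ P + 2 < 2 * Module.finrank ℝ E)
    (F : B × I → E) (h : B × I → ℝ) (hF : Continuous F) (hh : Continuous h)
    (hne : ∀ p, F p = 0 → h p ≠ 0) (hF0 : ∀ b, F (b, 0) = e) (hF1 : ∀ b, F (b, 1) = e) :
    ∃ (F' : B × I → E) (l : B → ℝ), Continuous F' ∧ Continuous l ∧ (∀ b, l b ∈ Set.Icc (0 : ℝ) 1) ∧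
      (∀ p, F p = e → F' p = e) ∧
      (∀ p (t : I), F p + (t : ℝ) • (F' p - F p) = 0 → h p ≠ 0) ∧
      (∀ b s, F' (b, s) = 0 → 0 < h (b, s) → l b < s) ∧
      (∀ b s, F' (b, s) = 0 → h (b, s) < 0 → s < l b) := by
  obtain ⟨η, hη, hη'⟩ := exists_ball_sub (E := E × ℝ) (W := {0}ᶜ) isOpen_compl_singleton
    (fun p => (F p, h p)) (hF.prodMk hh) (by
      intro p hp
      simp only [Set.mem_singleton_iff, Prod.mk_eq_zero] at hp
      exact hne p hp.1 hp.2)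
  have hη2 : ∀ p, h p = 0 → η ≤ ‖F p‖ := by
    intro p hp
    by_contra! hlt
    refine hη' p 0 ?_ rfl
    simpa [Prod.norm_def, hp] using hlt
  set δ := min η ‖e‖ / 2 with hδ
  have hδ0 : 0 < δ := by have := norm_pos_iff.2 he; positivity
  have hδ1 : 2 * δ ≤ η := by linarith [min_le_left η ‖e‖]
  have hδ2 : 2 * δ ≤ ‖e‖ := by linarith [min_le_right η ‖e‖]
  have hδ3 : 0 < δ / 3 := by positivity
  obtain ⟨G, hG, hGF⟩ := smooth_approx (r.prod Ret.interval) F hF hδ3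
  obtain ⟨v, w, hv, hw, hvw⟩ := exists_shift2 G hG hd hδ3
  let Q : B × I → E := fun p => G (r.ι p.1, (p.2 : ℝ)) + v + (p.2 : ℝ) • w
  have hQ : ∀ p, ‖Q p - F p‖ < δ := by
    intro p
    have h1 : ‖G (r.ι p.1, (p.2 : ℝ)) - F p‖ < δ / 3 := hGF p
    have h2 : ‖(p.2 : ℝ) • w‖ < δ / 3 := by
      rw [norm_smul, Real.norm_of_nonneg p.2.2.1]
      exact lt_of_le_of_lt (mul_le_of_le_one_left (norm_nonneg _) p.2.2.2) hw
    have h3 : Q p - F p = (G (r.ι p.1, (p.2 : ℝ)) - F p) + v + (p.2 : ℝ) • w := by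
      simp only [Q]; abel
    rw [h3]
    have := norm_add_le ((G (r.ι p.1, (p.2 : ℝ)) - F p) + v) ((p.2 : ℝ) • w)
    have := norm_add_le (G (r.ι p.1, (p.2 : ℝ)) - F p) v
    linarith
  have hcι := r.cι
  have hGc := hG.continuous
  have hQc : Continuous Q := by fun_prop
  let k : B × I → ℝ := fun p => 1 - kap δ ‖F p‖
  let F' : B × I → E := fun p => F p + k p • (Q p - F p)
  have hF'c : Continuous F' := by fun_prop
  have hfix : ∀ p, 2 * δ ≤ ‖F p‖ → F' p = F p := by
    intro p hp
    simp [F', k, kap_eq_one hδ0 hp]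
  have hzero : ∀ p, F' p = 0 → Q p = 0 := by
    intro p hp
    by_cases hle : ‖F p‖ ≤ δ
    · simpa [F', k, kap_eq_zero hδ0 hle] using hp
    · exfalso
      have h1 : ‖k p • (Q p - F p)‖ < δ := by
        rw [norm_smul, Real.norm_of_nonneg (sub_nonneg.2 (kap_le_one _ _))]
        refine lt_of_le_of_lt (mul_le_of_le_one_left (norm_nonneg _) ?_) (hQ p)
        linarith [kap_nonneg δ ‖F p‖]
      have h2 : F p = -(k p • (Q p - F p)) := eq_neg_of_add_eq_zero_left hp
      rw [h2, norm_neg] at hle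
      exact hle h1.le
  have hF'e : ∀ p, F p = e → F' p = e := by
    intro p hp
    rw [hfix p (by rw [hp]; exact hδ2), hp]
  have hseg : ∀ p (t : I), F p + (t : ℝ) • (F' p - F p) = 0 → h p ≠ 0 := by
    intro p t hp h0
    have := hη2 p h0
    rw [hfix p (hδ1.trans this), sub_self, smul_zero, add_zero] at hp
    exact hne p hp h0
  let A : Set B := Prod.fst '' {p : B × I | F' p = 0 ∧ 0 ≤ h p}
  let A' : Set B := Prod.fst '' {p : B × I | F' p = 0 ∧ h p ≤ 0}
  have hA : IsClosed A := by
    refine (IsClosed.isCompact ?_).image continuous_fst |>.isClosed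
    exact (isClosed_eq hF'c continuous_const).inter (isClosed_le continuous_const hh)
  have hA' : IsClosed A' := by
    refine (IsClosed.isCompact ?_).image continuous_fst |>.isClosed
    exact (isClosed_eq hF'c continuous_const).inter (isClosed_le hh continuous_const)
  have hne' : ∀ p, F' p = 0 → h p ≠ 0 := by
    intro p hp
    refine hseg p 1 ?_
    simpa using hp
  have hdisj : Disjoint A A' := by
    rw [Set.disjoint_left]
    rintro _ ⟨⟨b, s⟩, ⟨h1, h2⟩, rfl⟩ ⟨⟨b', s'⟩, ⟨h1', h2'⟩, hbb⟩
    simp only at hbb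
    subst hbb
    have q1 := hzero _ h1
    have q2 := hzero _ h1'
    have n1 := hne' _ h1
    rcases lt_trichotomy s s' with hlt | rfl | hlt
    · exact hvw _ _ _ hlt q1 q2
    · exact n1 (le_antisymm h2' h2)
    · exact hvw _ _ _ hlt q2 q1
  obtain ⟨l, hl0, hl1, hl⟩ := exists_continuous_zero_one_of_isClosed hA hA' hdisj
  refine ⟨F', l, hF'c, l.continuous, hl, hF'e, hseg, ?_, ?_⟩
  · intro b s hz hpos
    rw [hl0 ⟨(b, s), ⟨hz, hpos.le⟩, rfl⟩]
    rcases s.2.1.eq_or_lt with h0 | h0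
    · exfalso
      have : s = 0 := Subtype.ext h0.symm
      rw [this, hF'e _ (hF0 b)] at hz
      exact he hz
    · exact h0
  · intro b s hz hneg
    rw [hl1 ⟨(b, s), ⟨hz, hneg.le⟩, rfl⟩]
    rcases s.2.2.eq_or_lt with h0 | h0
    · exfalso
      have : s = 1 := Subtype.ext h0
      rw [this, hF'e _ (hF1 b)] at hz
      exact he hz
    · exact h0

end TS

end Part4

section Part5
open scoped unitInterval Topology Topology.Homotopy

set_option linter.unusedSectionVars false

namespace TS

/-- projection to the unit interval -/
noncomputable def pr : ℝ → I := Set.projIcc 0 1 zero_le_one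

@[fun_prop] theorem pr_continuous : Continuous pr := continuous_projIcc
theorem pr_val {r : ℝ} (h : r ∈ Set.Icc (0 : ℝ) 1) : (pr r : ℝ) = r := by
  simp only [pr, Set.projIcc_of_mem zero_le_one h]
theorem pr_coe (r : I) : pr r = r := Set.projIcc_val zero_le_one r
theorem pr_zero : pr 0 = 0 := by ext; rw [pr_val] <;> simp
theorem pr_one : pr 1 = 1 := by ext; rw [pr_val] <;> simp

theorem bdry_iff {n : ℕ} (y : Fin (n + 1) → I) :
    y ∈ Cube.boundary (Fin (n + 1)) ↔ y 0 = 0 ∨ y 0 = 1 ∨ Fin.tail y ∈ Cube.boundary (Fin n) := by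
  simp only [Cube.boundary, Set.mem_ofPred_eq, Fin.exists_fin_succ, Fin.tail, or_assoc]

@[fun_prop] theorem tail_continuous {n : ℕ} :
    Continuous (fun y : Fin (n + 1) → I => (Fin.tail y : Fin n → I)) := by
  unfold Fin.tail; fun_prop

@[fun_prop] theorem cons_continuous {n : ℕ} {Z : Type*} [TopologicalSpace Z] {f : Z → I}
    {g : Z → (Fin n → I)} (hf : Continuous f) (hg : Continuous g) :
    Continuous (fun z => (Fin.cons (f z) (g z) : Fin (n + 1) → I)) := by
  refine continuous_pi fun i => ?_
  refine Fin.cases ?_ ?_ i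
  · simpa using hf
  · intro j; simp only [Fin.cons_succ]; fun_prop

variable {E : Type*} [NormedAddCommGroup E] [NormedSpace ℝ E] [FiniteDimensional ℝ E]

/-- Suspension formula. -/
noncomputable def sv (e z : E) (s : ℝ) : E × ℝ :=
  ((1 - |2 * s - 1|) • z + |2 * s - 1| • e, (2 * s - 1) * (1 - |2 * s - 1|) * ‖z - e‖)

theorem abs_tau {s : ℝ} (h : s ∈ Set.Icc (0 : ℝ) 1) : |2 * s - 1| ≤ 1 := by
  rw [abs_le]; constructor <;> linarith [h.1, h.2]

theorem sv_pos {e z : E} (he : e ≠ 0) (hz : z ≠ 0) {s : ℝ} (h : s ∈ Set.Icc (0 : ℝ) 1)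
    (h0 : (sv e z s).1 = 0) : (1 / 2 < s ∧ 0 < (sv e z s).2) ∨ (s < 1 / 2 ∧ (sv e z s).2 < 0) := by
  have ht := abs_tau h
  have h1 : |2 * s - 1| ≠ 1 := by
    intro h1; simp [sv, h1] at h0; exact he h0
  have hlt : 0 < 1 - |2 * s - 1| := by
    have := lt_of_le_of_ne ht h1
    linarith
  have hze : 0 < ‖z - e‖ := by
    rw [norm_pos_iff, sub_ne_zero]
    rintro rfl
    simp only [sv] at h0
    rw [← add_smul] at h0
    simp at h0
    exact he h0
  have hs : s ≠ 1 / 2 := by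
    rintro rfl
    simp [sv] at h0
    exact hz h0
  rcases lt_or_gt_of_ne hs with hs | hs
  · right
    refine ⟨hs, ?_⟩
    simp only [sv]
    have := mul_pos hlt hze
    have h2 : 2 * s - 1 < 0 := by linarith
    rw [mul_assoc]
    exact mul_neg_of_neg_of_pos h2 this
  · left
    refine ⟨hs, ?_⟩
    simp only [sv]
    have h2 : 0 < 2 * s - 1 := by linarith
    positivity

theorem sv_ne {e z : E} (he : e ≠ 0) (hz : z ≠ 0) {s : ℝ} (h : s ∈ Set.Icc (0 : ℝ) 1) :
    sv e z s ≠ 0 := by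
  intro h0
  have h1 : (sv e z s).1 = 0 := by rw [h0]; rfl
  have h2 : (sv e z s).2 = 0 := by rw [h0]; rfl
  have := sv_pos he hz h h1
  rw [h2] at this
  simp at this

theorem sv_zero (e z : E) : sv e z 0 = (e, 0) := by simp [sv]
theorem sv_one (e z : E) : sv e z 1 = (e, 0) := by norm_num [sv]
theorem sv_self (e : E) (s : ℝ) : sv e e s = (e, 0) := by simp [sv, ← add_smul]
theorem sv_half (e z : E) : sv e z (1/2) = (z, 0) := by simp [sv]
theorem sv_continuous (e : E) : Continuous (fun q : E × ℝ => sv e q.1 q.2) := by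
  unfold sv; fun_prop

theorem sv_cont {Z : Type*} [TopologicalSpace Z] (e : E) {f : Z → E} {g : Z → ℝ}
    (hf : Continuous f) (hg : Continuous g) : Continuous (fun z => sv e (f z) (g z)) :=
  (sv_continuous e).comp (hf.prodMk hg)

/-- The base point of the suspension -/
def sbase (e : ({0}ᶜ : Set E)) : ({0}ᶜ : Set (E × ℝ)) :=
  ⟨((e : E), 0), by
    intro h
    have := congrArg Prod.fst h
    exact e.2 this⟩

theorem sv_bdry {n : ℕ} {e : ({0}ᶜ : Set E)} (g : GenLoop (Fin n) ({0}ᶜ : Set E) e)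
    (y) (hy : y ∈ Cube.boundary (Fin (n + 1))) :
    sv (e : E) (g (Fin.tail y)) (y 0 : ℝ) = ((e : E), 0) := by
  rcases (bdry_iff y).1 hy with h | h | h
  · simp [h, sv_zero]
  · simp [h, sv_one]
  · rw [loop_bdry g _ h, sv_self]

/-- The suspension of a loop. -/
noncomputable def susp {n : ℕ} {e : ({0}ᶜ : Set E)} (g : GenLoop (Fin n) ({0}ᶜ : Set E) e) :
    GenLoop (Fin (n + 1)) ({0}ᶜ : Set (E × ℝ)) (sbase e) :=
  loopSub (fun y => sv (e : E) (g (Fin.tail y)) (y 0 : ℝ))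
    (by
      have h1 := loop_continuous g
      exact sv_cont (e : E) (h1.comp tail_continuous) (by fun_prop))
    (fun y => sv_ne e.2 (g _).2 (y 0).2) (fun y hy => sv_bdry g y hy)

theorem susp_apply {n : ℕ} {e : ({0}ᶜ : Set E)} (g : GenLoop (Fin n) ({0}ᶜ : Set E) e) (y) :
    (susp g y : E × ℝ) = sv (e : E) (g (Fin.tail y)) (y 0 : ℝ) := rfl

theorem susp_homotopic {n : ℕ} {e : ({0}ᶜ : Set E)} {f g : GenLoop (Fin n) ({0}ᶜ : Set E) e}
    (h : GenLoop.Homotopic f g) : GenLoop.Homotopic (susp f) (susp g) := by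
  obtain ⟨H, hc, hm, h0, h1, hb⟩ := homotopic_sub_elim h
  refine homotopic_sub _ _ (fun p => sv (e : E) (H (p.1, Fin.tail p.2)) (p.2 0 : ℝ)) ?_ ?_ ?_ ?_ ?_
  · exact sv_cont (e : E) (by fun_prop) (by fun_prop)
  · intro p
    exact sv_ne e.2 (hm _) (p.2 0).2
  · intro y; simp [h0, susp_apply]
  · intro y; simp [h1, susp_apply]
  · intro t y hy
    rcases (bdry_iff y).1 hy with h | h | h
    · simp [h, sv_zero, sbase]
    · simp [h, sv_one, sbase]
    · simp only
      rw [hb _ _ h, sv_self]; rfl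

theorem susp_trans {n : ℕ} {e : ({0}ᶜ : Set E)} (i : Fin n)
    (f g : GenLoop (Fin n) ({0}ᶜ : Set E) e) :
    susp (GenLoop.transAt i f g) = GenLoop.transAt i.succ (susp f) (susp g) := by
  ext1 t
  apply Subtype.ext
  rw [susp_apply]
  simp only [GenLoop.transAt, GenLoop.coe_copy]
  by_cases h : (t i.succ : ℝ) ≤ 1 / 2
  · have h' : (Fin.tail t i : ℝ) ≤ 1 / 2 := h
    rw [if_pos h', if_pos h, susp_apply, Function.update_of_ne (Fin.succ_ne_zero i).symm]
    congr 3
    funext j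
    simp [Fin.tail, Function.update_apply]
  · have h' : ¬ (Fin.tail t i : ℝ) ≤ 1 / 2 := h
    rw [if_neg h', if_neg h, susp_apply, Function.update_of_ne (Fin.succ_ne_zero i).symm]
    congr 3
    funext j
    simp [Fin.tail, Function.update_apply]

/-- Two loops which are in suspension position and agree on the equator are homotopic. -/
theorem equator {n : ℕ} {e : ({0}ᶜ : Set E)}
    (f g : GenLoop (Fin (n + 1)) ({0}ᶜ : Set (E × ℝ)) (sbase e))
    (f1 : ∀ y, (1 / 2 : ℝ) ≤ y 0 → (f y : E × ℝ).1 = 0 → 0 < (f y : E × ℝ).2)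
    (f2 : ∀ y, (y 0 : ℝ) ≤ 1 / 2 → (f y : E × ℝ).1 = 0 → (f y : E × ℝ).2 < 0)
    (g1 : ∀ y, (1 / 2 : ℝ) ≤ y 0 → (g y : E × ℝ).1 = 0 → 0 < (g y : E × ℝ).2)
    (g2 : ∀ y, (y 0 : ℝ) ≤ 1 / 2 → (g y : E × ℝ).1 = 0 → (g y : E × ℝ).2 < 0)
    (hfg : ∀ y, (y 0 : ℝ) = 1 / 2 → (f y : E × ℝ).1 = (g y : E × ℝ).1) :
    GenLoop.Homotopic f g := by
  have hfc := loop_continuous f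
  have hgc := loop_continuous g
  have hfb := loop_bdry f
  have hgb := loop_bdry g
  let w : (Fin (n + 1) → I) → ℝ := fun y => ∏ i, ((y i : ℝ) * (1 - y i))
  have hw0 : ∀ y, 0 ≤ w y := fun y => Finset.prod_nonneg fun i _ =>
    mul_nonneg (y i).2.1 (sub_nonneg.2 (y i).2.2)
  have hwb : ∀ y ∈ Cube.boundary (Fin (n + 1)), w y = 0 := by
    rintro y ⟨i, hi⟩
    refine Finset.prod_eq_zero (Finset.mem_univ i) ?_
    rcases hi with hi | hi <;> simp [hi]
  have hwnb : ∀ y, w y = 0 → y ∈ Cube.boundary (Fin (n + 1)) := by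
    intro y hy
    obtain ⟨i, -, hi⟩ := Finset.prod_eq_zero_iff.1 hy
    refine ⟨i, ?_⟩
    rcases mul_eq_zero.1 hi with hi | hi
    · left; exact Subtype.ext hi
    · right; exact Subtype.ext (by rw [sub_eq_zero] at hi; exact hi.symm)
  have hwc : Continuous w := by fun_prop
  let χ : (Fin (n + 1) → I) → ℝ := fun y => (2 * (y 0 : ℝ) - 1) * w y
  have hχc : Continuous χ := by fun_prop
  have hχb : ∀ y ∈ Cube.boundary (Fin (n + 1)), χ y = 0 := fun y hy => by simp [χ, hwb y hy]
  -- generic first and last steps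
  have step : ∀ (f : GenLoop (Fin (n + 1)) ({0}ᶜ : Set (E × ℝ)) (sbase e)),
      (∀ y, (1 / 2 : ℝ) ≤ y 0 → (f y : E × ℝ).1 = 0 → 0 < (f y : E × ℝ).2) →
      (∀ y, (y 0 : ℝ) ≤ 1 / 2 → (f y : E × ℝ).1 = 0 → (f y : E × ℝ).2 < 0) →
      ∀ Λ : ℝ, 0 ≤ Λ → ∀ y, (f y : E × ℝ) + ((0 : E), Λ * χ y) ∈ ({0}ᶜ : Set (E × ℝ)) := by
    intro f f1 f2 Λ hΛ y h0
    have h1 := congrArg Prod.fst h0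
    have h2 := congrArg Prod.snd h0
    simp only [Prod.fst_add, add_zero, Prod.fst_zero, Prod.snd_add, Prod.snd_zero] at h1 h2
    rcases le_total (1 / 2 : ℝ) (y 0) with hy | hy
    · have := f1 y hy h1
      have : 0 ≤ χ y := mul_nonneg (by linarith) (hw0 y)
      nlinarith [mul_nonneg hΛ this]
    · have := f2 y hy h1
      have : χ y ≤ 0 := mul_nonpos_of_nonpos_of_nonneg (by linarith) (hw0 y)
      nlinarith [mul_nonneg hΛ (neg_nonneg.2 this)]
  let fE : I × (Fin (n + 1) → I) → E := fun q =>
    (1 - (q.1 : ℝ)) • (f q.2 : E × ℝ).1 + (q.1 : ℝ) • (g q.2 : E × ℝ).1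
  let fh : I × (Fin (n + 1) → I) → ℝ := fun q =>
    (1 - (q.1 : ℝ)) * (f q.2 : E × ℝ).2 + (q.1 : ℝ) * (g q.2 : E × ℝ).2
  have hfE : Continuous fE := by fun_prop
  have hfh : Continuous fh := by fun_prop
  let Kz : Set (I × (Fin (n + 1) → I)) := {q | fE q = 0}
  have hKz : IsCompact Kz := (isClosed_eq hfE continuous_const).isCompact
  have hχK : ∀ q ∈ Kz, χ q.2 ≠ 0 := by
    intro q hq h0
    have hq' : fE q = 0 := hq
    rcases mul_eq_zero.1 h0 with h0 | h0
    · have hy : (q.2 0 : ℝ) = 1 / 2 := by linarith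
      simp only [fE, hfg q.2 hy, ← add_smul] at hq'
      simp at hq'
      have a1 := g1 q.2 hy.ge hq'
      have a2 := g2 q.2 hy.le hq'
      exact lt_asymm a1 a2
    · have hb := hwnb _ h0
      simp only [fE, hfb _ hb, hgb _ hb, ← add_smul] at hq'
      simp [sbase] at hq'
      exact e.2 hq'
  obtain ⟨Λ, hΛ⟩ := hKz.exists_bound_of_continuousOn (f := fun q => fh q / χ q.2)
    (hfh.continuousOn.div (by fun_prop) hχK)
  let L : ℝ := |Λ| + 1
  have hL : 0 ≤ L := by positivity
  have hmid : ∀ q, ((fE q, fh q + L * χ q.2) : E × ℝ) ∈ ({0}ᶜ : Set (E × ℝ)) := by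
    intro q h0
    have h1 : fE q = 0 := congrArg Prod.fst h0
    have h2 : fh q + L * χ q.2 = 0 := congrArg Prod.snd h0
    have h3 := hΛ q h1
    have h4 := hχK q h1
    have h5 : fh q / χ q.2 = - L := by
      rw [div_eq_iff h4]; linarith
    rw [h5, norm_neg, Real.norm_of_nonneg hL] at h3
    have := le_abs_self Λ
    simp only [L] at h3
    linarith
  have hFc : ∀ (f : GenLoop (Fin (n + 1)) ({0}ᶜ : Set (E × ℝ)) (sbase e)),
      Continuous (fun y => (f y : E × ℝ) + ((0 : E), L * χ y)) := by
    intro f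
    have := loop_continuous f
    fun_prop
  have hFb : ∀ (f : GenLoop (Fin (n + 1)) ({0}ᶜ : Set (E × ℝ)) (sbase e)),
      ∀ y ∈ Cube.boundary (Fin (n + 1)), (f y : E × ℝ) + ((0 : E), L * χ y) = sbase e := by
    intro f y hy
    rw [loop_bdry f y hy, hχb y hy]
    simp
  have tr : ∀ (f : GenLoop (Fin (n + 1)) ({0}ᶜ : Set (E × ℝ)) (sbase e))
      (f1 : (∀ y, (1 / 2 : ℝ) ≤ y 0 → (f y : E × ℝ).1 = 0 → 0 < (f y : E × ℝ).2))
      (f2 : (∀ y, (y 0 : ℝ) ≤ 1 / 2 → (f y : E × ℝ).1 = 0 → (f y : E × ℝ).2 < 0)),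
      GenLoop.Homotopic f (loopSub (fun y => (f y : E × ℝ) + ((0 : E), L * χ y)) (hFc f)
        (step f f1 f2 L hL) (hFb f)) := by
    intro f f1 f2
    have := loop_continuous f
    refine homotopic_sub _ _ (fun q => (f q.2 : E × ℝ) + ((0 : E), ((q.1 : ℝ) * L) * χ q.2))
      (by fun_prop) (fun q => step f f1 f2 _ (mul_nonneg q.1.2.1 hL) _) ?_ ?_ ?_
    · intro y; simp
    · intro y; simp
    · intro t y hy
      simp only
      rw [loop_bdry f y hy, hχb y hy]
      simp
  refine (tr f f1 f2).trans (GenLoop.Homotopic.trans ?_ (tr g g1 g2).symm)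
  refine homotopic_sub _ _ (fun q => (fE q, fh q + L * χ q.2)) (by fun_prop) hmid ?_ ?_ ?_
  · intro y
    ext <;> simp [fE, fh]
  · intro y
    ext <;> simp [fE, fh]
  · intro t y hy
    simp only [fE, fh, hfb _ hy, hgb _ hy, hχb y hy]
    ext
    · simp [← add_smul]
    · simp [sbase]

end TS

end Part5

section Part6
open scoped unitInterval Topology Topology.Homotopy

set_option linter.unusedSectionVars false

namespace TS

variable {E : Type*} [NormedAddCommGroup E] [NormedSpace ℝ E] [FiniteDimensional ℝ E]

/-- Reparametrization moving the level `1/2` to the level `l`. -/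
noncomputable def psi (l s : ℝ) : ℝ := l * min (2 * s) 1 + (1 - l) * max (2 * s - 1) 0

theorem psi_continuous : Continuous (fun q : ℝ × ℝ => psi q.1 q.2) := by unfold psi; fun_prop

theorem psi_cont {Z : Type*} [TopologicalSpace Z] {f : Z → ℝ} {g : Z → ℝ}
    (hf : Continuous f) (hg : Continuous g) : Continuous (fun z => psi (f z) (g z)) :=
  psi_continuous.comp (hf.prodMk hg)

theorem psi_zero (l : ℝ) : psi l 0 = 0 := by simp [psi]
theorem psi_one (l : ℝ) : psi l 1 = 1 := by norm_num [psi]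
theorem psi_half (l : ℝ) : psi l (1 / 2) = l := by norm_num [psi]
theorem psi_ge {l s : ℝ} (hl : l ∈ Set.Icc (0 : ℝ) 1) (hs : 1 / 2 ≤ s) : l ≤ psi l s := by
  have h1 : min (2 * s) 1 = 1 := min_eq_right (by linarith)
  have h2 : max (2 * s - 1) 0 = 2 * s - 1 := max_eq_left (by linarith)
  rw [psi, h1, h2]
  nlinarith [mul_nonneg (sub_nonneg.2 hl.2) (by linarith : (0 : ℝ) ≤ 2 * s - 1)]
theorem psi_le {l s : ℝ} (hl : l ∈ Set.Icc (0 : ℝ) 1) (hs : s ≤ 1 / 2) : psi l s ≤ l := by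
  have h1 : min (2 * s) 1 = 2 * s := min_eq_left (by linarith)
  have h2 : max (2 * s - 1) 0 = 0 := max_eq_right (by linarith)
  rw [psi, h1, h2]
  nlinarith [mul_nonneg hl.1 (by linarith : (0 : ℝ) ≤ 1 - 2 * s)]
theorem psi_mem {l s : ℝ} (hl : l ∈ Set.Icc (0 : ℝ) 1) (hs : s ∈ Set.Icc (0 : ℝ) 1) :
    psi l s ∈ Set.Icc (0 : ℝ) 1 := by
  have h1 : 0 ≤ min (2 * s) 1 := le_min (by linarith [hs.1]) zero_le_one
  have h2 : min (2 * s) 1 ≤ 1 := min_le_right _ _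
  have h3 : 0 ≤ max (2 * s - 1) 0 := le_max_right _ _
  have h4 : max (2 * s - 1) 0 ≤ 1 := max_le (by linarith [hs.2]) zero_le_one
  have h5 := mul_nonneg hl.1 h1
  have h6 := mul_nonneg (sub_nonneg.2 hl.2) h3
  have h7 := mul_nonneg hl.1 (sub_nonneg.2 h2)
  have h8 := mul_nonneg (sub_nonneg.2 hl.2) (sub_nonneg.2 h4)
  constructor
  · rw [psi]; linarith
  · rw [psi]; nlinarith

theorem susp_surj {a : ℕ} {e : ({0}ᶜ : Set E)} (hE : Module.finrank ℝ E = a + 2)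
    (f : GenLoop (Fin (a + 1 + 1)) ({0}ᶜ : Set (E × ℝ)) (sbase e)) :
    ∃ g : GenLoop (Fin (a + 1)) ({0}ᶜ : Set E) e, GenLoop.Homotopic (susp g) f := by
  have hfc := loop_continuous f
  let cs : (Fin (a + 1) → I) × I → (Fin (a + 1 + 1) → I) := fun p => Fin.cons p.2 p.1
  have hcs : Continuous cs := cons_continuous continuous_snd continuous_fst
  let F : (Fin (a + 1) → I) × I → E := fun p => (f (cs p) : E × ℝ).1
  let h : (Fin (a + 1) → I) × I → ℝ := fun p => (f (cs p) : E × ℝ).2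
  have hF : Continuous F := continuous_fst.comp (hfc.comp hcs)
  have hh : Continuous h := continuous_snd.comp (hfc.comp hcs)
  have hfy : ∀ y, (f y : E × ℝ) = (F (Fin.tail y, y 0), h (Fin.tail y, y 0)) := by
    intro y
    simp only [F, h, cs, Fin.cons_self_tail]
  have hbd : ∀ b s, (Fin.cons s b : Fin (a + 1 + 1) → I) ∈ Cube.boundary (Fin (a + 1 + 1)) →
      F (b, s) = e ∧ h (b, s) = 0 := by
    intro b s hb
    simp only [F, h, cs, loop_bdry f _ hb]
    exact ⟨rfl, rfl⟩
  have hne : ∀ p, F p = 0 → h p ≠ 0 := by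
    intro p h1 h2
    exact (f (cs p)).2 (Prod.ext h1 h2)
  have hb0 : ∀ b, (Fin.cons 0 b : Fin (a + 1 + 1) → I) ∈ Cube.boundary (Fin (a + 1 + 1)) :=
    fun b => ⟨0, Or.inl rfl⟩
  have hb1 : ∀ b, (Fin.cons 1 b : Fin (a + 1 + 1) → I) ∈ Cube.boundary (Fin (a + 1 + 1)) :=
    fun b => ⟨0, Or.inr rfl⟩
  have hbt : ∀ b s, b ∈ Cube.boundary (Fin (a + 1)) →
      (Fin.cons s b : Fin (a + 1 + 1) → I) ∈ Cube.boundary (Fin (a + 1 + 1)) :=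
    fun b s hb => (bdry_iff _).2 (Or.inr (Or.inr (by simpa using hb)))
  obtain ⟨F', l, hF', hlc, hl, hfix, hseg, hpos, hneg⟩ := sep (Ret.cube (a + 1)) (e : E) e.2
    (by simp [hE]; omega) F h hF hh hne (fun b => (hbd b 0 (hb0 b)).1) (fun b => (hbd b 1 (hb1 b)).1)
  have hne' : ∀ p, F' p = 0 → h p ≠ 0 := by
    intro p hp
    refine hseg p 1 ?_
    simpa using hp
  have hFcont : Continuous (fun p => (F' p, h p)) := hF'.prodMk hh
  let f1 : GenLoop (Fin (a + 1 + 1)) ({0}ᶜ : Set (E × ℝ)) (sbase e) :=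
    loopSub (fun y => (F' (Fin.tail y, y 0), h (Fin.tail y, y 0))) (by fun_prop)
      (fun y h0 => hne' _ (congrArg Prod.fst h0) (congrArg Prod.snd h0))
      (fun y hy => by
        have := hbd (Fin.tail y) (y 0) (by simpa using hy)
        rw [hfix _ this.1, this.2]
        rfl)
  have s1 : GenLoop.Homotopic f f1 := by
    refine homotopic_sub _ _ (fun q => (F (Fin.tail q.2, q.2 0) + (q.1 : ℝ) •
      (F' (Fin.tail q.2, q.2 0) - F (Fin.tail q.2, q.2 0)), h (Fin.tail q.2, q.2 0)))
      (by fun_prop) ?_ ?_ ?_ ?_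
    · intro q h0
      exact hseg _ _ (congrArg Prod.fst h0) (congrArg Prod.snd h0)
    · intro y
      rw [hfy]; simp
    · intro y; simp [f1]
    · intro t y hy
      have := hbd (Fin.tail y) (y 0) (by simpa using hy)
      simp only [hfix _ this.1, this.1, this.2]
      simp [sbase]
  let ps : (Fin (a + 1 + 1) → I) → ℝ := fun y => psi (l (Fin.tail y)) (y 0)
  have hps : Continuous ps := psi_cont (by fun_prop) (by fun_prop)
  have hpsm : ∀ y, ps y ∈ Set.Icc (0 : ℝ) 1 := fun y => psi_mem (hl _) (y 0).2
  have hbps : ∀ y ∈ Cube.boundary (Fin (a + 1 + 1)), ∀ u : I,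
      (F' (Fin.tail y, pr ((1 - (u : ℝ)) * (y 0 : ℝ) + u * ps y)) = e) ∧
      (h (Fin.tail y, pr ((1 - (u : ℝ)) * (y 0 : ℝ) + u * ps y)) = 0) := by
    intro y hy u
    rcases (bdry_iff y).1 hy with hy | hy | hy
    · have : pr ((1 - (u : ℝ)) * (y 0 : ℝ) + u * ps y) = 0 := by
        simp [ps, hy, psi_zero, pr_zero]
      have := this ▸ hbd (Fin.tail y) 0 (hb0 _)
      exact ⟨hfix _ this.1, this.2⟩
    · have : pr ((1 - (u : ℝ)) * (y 0 : ℝ) + u * ps y) = 1 := by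
        simp [ps, hy, psi_one, pr_one]
      have := this ▸ hbd (Fin.tail y) 1 (hb1 _)
      exact ⟨hfix _ this.1, this.2⟩
    · have := hbd (Fin.tail y) (pr ((1 - (u : ℝ)) * (y 0 : ℝ) + u * ps y)) (hbt _ _ hy)
      exact ⟨hfix _ this.1, this.2⟩
  let f2 : GenLoop (Fin (a + 1 + 1)) ({0}ᶜ : Set (E × ℝ)) (sbase e) :=
    loopSub (fun y => (F' (Fin.tail y, pr (ps y)), h (Fin.tail y, pr (ps y)))) (by fun_prop)
      (fun y h0 => hne' _ (congrArg Prod.fst h0) (congrArg Prod.snd h0))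
      (fun y hy => by
        have := hbps y hy 1
        simp only [Set.Icc.coe_one, sub_self, zero_mul, one_mul, zero_add] at this
        rw [this.1, this.2]
        rfl)
  have s2 : GenLoop.Homotopic f1 f2 := by
    refine homotopic_sub _ _ (fun q =>
      (F' (Fin.tail q.2, pr ((1 - (q.1 : ℝ)) * (q.2 0 : ℝ) + q.1 * ps q.2)),
        h (Fin.tail q.2, pr ((1 - (q.1 : ℝ)) * (q.2 0 : ℝ) + q.1 * ps q.2)))) (by fun_prop) ?_ ?_ ?_ ?_
    · intro q h0
      exact hne' _ (congrArg Prod.fst h0) (congrArg Prod.snd h0)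
    · intro y
      simp [f1, pr_coe]
    · intro y; simp [f2]
    · intro t y hy
      have := hbps y hy t
      simp only [this.1, this.2]
      rfl
  let g : GenLoop (Fin (a + 1)) ({0}ᶜ : Set E) e := loopSub (fun b => F' (b, pr (l b)))
    (by fun_prop) (fun b h0 => by
      rcases lt_or_gt_of_ne (hne' _ h0) with h1 | h1
      · have := hneg _ _ h0 h1
        rw [pr_val (hl b)] at this
        exact lt_irrefl _ this
      · have := hpos _ _ h0 h1
        rw [pr_val (hl b)] at this
        exact lt_irrefl _ this)
    (fun b hb => hfix _ (hbd b _ (hbt b _ hb)).1)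
  refine ⟨g, GenLoop.Homotopic.trans ?_ (s1.trans s2).symm⟩
  refine equator _ _ ?_ ?_ ?_ ?_ ?_
  · intro y hy h0
    rcases sv_pos e.2 (g (Fin.tail y)).2 (y 0).2 h0 with h1 | h1
    · exact h1.2
    · linarith [h1.1]
  · intro y hy h0
    rcases sv_pos e.2 (g (Fin.tail y)).2 (y 0).2 h0 with h1 | h1
    · linarith [h1.1]
    · exact h1.2
  · intro y hy h0
    have h0' : F' (Fin.tail y, pr (ps y)) = 0 := h0
    refine lt_of_not_ge fun hle => ?_
    have h1 := hneg _ _ h0' (lt_of_le_of_ne hle (hne' _ h0'))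
    rw [pr_val (hpsm y)] at h1
    exact absurd (psi_ge (hl _) hy) (not_le.2 h1)
  · intro y hy h0
    have h0' : F' (Fin.tail y, pr (ps y)) = 0 := h0
    refine lt_of_not_ge fun hle => ?_
    have h1 := hpos _ _ h0' (lt_of_le_of_ne hle (hne' _ h0').symm)
    rw [pr_val (hpsm y)] at h1
    exact absurd (psi_le (hl _) hy) (not_le.2 h1)
  · intro y hy
    rw [susp_apply, hy, sv_half]
    simp [f2, ps, hy, g]
    rw [show (2 : ℝ)⁻¹ = 1 / 2 by norm_num, psi_half]

theorem susp_inj {a : ℕ} {e : ({0}ᶜ : Set E)} (hE : Module.finrank ℝ E = a + 2) (ha : 1 ≤ a)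
    (g₀ g₁ : GenLoop (Fin (a + 1)) ({0}ᶜ : Set E) e) (hg : GenLoop.Homotopic (susp g₀) (susp g₁)) :
    GenLoop.Homotopic g₀ g₁ := by
  obtain ⟨H, hHc, hHm, hH0, hH1, hHb⟩ := homotopic_sub_elim hg
  let cs : (I × (Fin (a + 1) → I)) × I → I × (Fin (a + 1 + 1) → I) :=
    fun p => (p.1.1, Fin.cons p.2 p.1.2)
  have hcs : Continuous cs := by
    refine Continuous.prodMk (by fun_prop) (cons_continuous continuous_snd (by fun_prop))
  let F : (I × (Fin (a + 1) → I)) × I → E := fun p => (H (cs p)).1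
  let h : (I × (Fin (a + 1) → I)) × I → ℝ := fun p => (H (cs p)).2
  have hF : Continuous F := continuous_fst.comp (hHc.comp hcs)
  have hh : Continuous h := continuous_snd.comp (hHc.comp hcs)
  have hbd : ∀ u b s, (Fin.cons s b : Fin (a + 1 + 1) → I) ∈ Cube.boundary (Fin (a + 1 + 1)) →
      F ((u, b), s) = e ∧ h ((u, b), s) = 0 := by
    intro u b s hb
    simp only [F, h, cs, hHb _ _ hb]
    exact ⟨rfl, rfl⟩
  have hne : ∀ p, F p = 0 → h p ≠ 0 := by
    intro p h1 h2
    exact hHm (cs p) (Prod.ext h1 h2)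
  have hb0 : ∀ b, (Fin.cons 0 b : Fin (a + 1 + 1) → I) ∈ Cube.boundary (Fin (a + 1 + 1)) :=
    fun b => ⟨0, Or.inl rfl⟩
  have hb1 : ∀ b, (Fin.cons 1 b : Fin (a + 1 + 1) → I) ∈ Cube.boundary (Fin (a + 1 + 1)) :=
    fun b => ⟨0, Or.inr rfl⟩
  have hbt : ∀ b s, b ∈ Cube.boundary (Fin (a + 1)) →
      (Fin.cons s b : Fin (a + 1 + 1) → I) ∈ Cube.boundary (Fin (a + 1 + 1)) :=
    fun b s hb => (bdry_iff _).2 (Or.inr (Or.inr (by simpa using hb)))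
  obtain ⟨F', l, hF', hlc, hl, hfix, hseg, hpos, hneg⟩ :=
    sep (Ret.interval.prod (Ret.cube (a + 1))) (e : E) e.2
    (by simp [hE]; omega) F h hF hh hne (fun b => (hbd b.1 b.2 0 (hb0 _)).1)
      (fun b => (hbd b.1 b.2 1 (hb1 _)).1)
  have hne' : ∀ p, F' p = 0 → h p ≠ 0 := by
    intro p hp
    refine hseg p 1 ?_
    simpa using hp
  have hF'b : ∀ u b s, b ∈ Cube.boundary (Fin (a + 1)) → F' ((u, b), s) = e :=
    fun u b s hb => hfix _ (hbd u b s (hbt b s hb)).1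
  let G : I → GenLoop (Fin (a + 1)) ({0}ᶜ : Set E) e := fun u =>
    loopSub (fun b => F' ((u, b), pr (l (u, b))))
    (by fun_prop) (fun b h0 => by
      rcases lt_or_gt_of_ne (hne' _ h0) with h1 | h1
      · have := hneg _ _ h0 h1
        rw [pr_val (hl _)] at this
        exact lt_irrefl _ this
      · have := hpos _ _ h0 h1
        rw [pr_val (hl _)] at this
        exact lt_irrefl _ this)
    (fun b hb => hF'b _ _ _ hb)
  have key : ∀ (u : I) (g : GenLoop (Fin (a + 1)) ({0}ᶜ : Set E) e),
      (∀ y, H (u, y) = susp g y) → GenLoop.Homotopic g (G u) := by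
    intro u g hg
    have hgc := loop_continuous g
    have hFv : ∀ b s, F ((u, b), s) = (sv (e : E) (g b) s).1 := by
      intro b s; simp only [F, cs, hg, susp_apply, Fin.tail_cons, Fin.cons_zero]
    have hhv : ∀ b s, h ((u, b), s) = (sv (e : E) (g b) s).2 := by
      intro b s; simp only [h, cs, hg, susp_apply, Fin.tail_cons, Fin.cons_zero]
    have half : (pr (1 / 2) : ℝ) = 1 / 2 := pr_val (by constructor <;> norm_num)
    have hF2 : ∀ b, F ((u, b), pr (1 / 2)) = g b := by
      intro b; rw [hFv, half, sv_half]
    have hh2 : ∀ b, h ((u, b), pr (1 / 2)) = 0 := by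
      intro b; rw [hhv, half, sv_half]
    have sgn_pos : ∀ b s, 0 < h ((u, b), s) → 1 / 2 < (s : ℝ) := by
      intro b s hs
      by_contra! hle
      rw [hhv] at hs
      simp only [sv] at hs
      have h1 : 0 ≤ (1 - |2 * (s : ℝ) - 1|) * ‖(g b : E) - e‖ :=
        mul_nonneg (sub_nonneg.2 (abs_tau s.2)) (norm_nonneg _)
      nlinarith
    have sgn_neg : ∀ b s, h ((u, b), s) < 0 → (s : ℝ) < 1 / 2 := by
      intro b s hs
      by_contra! hle
      rw [hhv] at hs
      simp only [sv] at hs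
      have h1 : 0 ≤ (1 - |2 * (s : ℝ) - 1|) * ‖(g b : E) - e‖ :=
        mul_nonneg (sub_nonneg.2 (abs_tau s.2)) (norm_nonneg _)
      nlinarith
    let M : GenLoop (Fin (a + 1)) ({0}ᶜ : Set E) e := loopSub (fun b => F' ((u, b), pr (1 / 2)))
      (by fun_prop) (fun b h0 => hne' _ h0 (hh2 b)) (fun b hb => hF'b _ _ _ hb)
    have t1 : GenLoop.Homotopic g M := by
      refine homotopic_sub _ _ (fun q => F ((u, q.2), pr (1 / 2)) + (q.1 : ℝ) •
        (F' ((u, q.2), pr (1 / 2)) - F ((u, q.2), pr (1 / 2)))) (by fun_prop) ?_ ?_ ?_ ?_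
      · intro q h0
        exact hseg _ _ h0 (hh2 _)
      · intro y; simp only [hF2]; simp
      · intro y; simp [M]
      · intro t b hb
        simp only [hF2, hF'b _ _ _ hb, loop_bdry g _ hb]
        simp
    have t2 : GenLoop.Homotopic M (G u) := by
      have hm : ∀ q : I × (Fin (a + 1) → I), (1 - (q.1 : ℝ)) * (1 / 2) + q.1 * l (u, q.2) ∈
          Set.Icc (0 : ℝ) 1 := by
        intro q
        have h1 := q.1.2.1
        have h2 := q.1.2.2
        have h3 := hl (u, q.2)
        have h4 := mul_nonneg h1 h3.1
        have h5 := mul_nonneg h1 (sub_nonneg.2 h3.2)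
        constructor <;> nlinarith
      refine homotopic_sub _ _ (fun q => F' ((u, q.2),
        pr ((1 - (q.1 : ℝ)) * (1 / 2) + q.1 * l (u, q.2)))) (by fun_prop) ?_ ?_ ?_ ?_
      · intro q h0
        have h1 := q.1.2.1
        have h2 := q.1.2.2
        rcases lt_or_gt_of_ne (hne' _ h0) with h3 | h3
        · have h4 := hneg _ _ h0 h3
          have h5 := sgn_neg _ _ h3
          rw [pr_val (hm q)] at h4 h5
          rcases le_total (l (u, q.2)) (1 / 2) with h6 | h6
          · nlinarith [mul_nonneg (sub_nonneg.2 h2) (sub_nonneg.2 h6),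
              mul_nonneg h1 (sub_nonneg.2 h6)]
          · nlinarith [mul_nonneg (sub_nonneg.2 h2) (sub_nonneg.2 h6),
              mul_nonneg h1 (sub_nonneg.2 h6)]
        · have h4 := hpos _ _ h0 h3
          have h5 := sgn_pos _ _ h3
          rw [pr_val (hm q)] at h4 h5
          rcases le_total (l (u, q.2)) (1 / 2) with h6 | h6
          · nlinarith [mul_nonneg (sub_nonneg.2 h2) (sub_nonneg.2 h6),
              mul_nonneg h1 (sub_nonneg.2 h6)]
          · nlinarith [mul_nonneg (sub_nonneg.2 h2) (sub_nonneg.2 h6),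
              mul_nonneg h1 (sub_nonneg.2 h6)]
      · intro y; simp [M]
      · intro y; simp [G]
      · intro t b hb
        exact hF'b _ _ _ hb
    exact t1.trans t2
  refine (key 0 g₀ hH0).trans (GenLoop.Homotopic.trans ?_ (key 1 g₁ hH1).symm)
  exact homotopic_sub _ _ (fun q => F' (q, pr (l q))) (by fun_prop) (fun q => (G q.1 q.2).2)
    (fun y => rfl) (fun y => rfl) (fun t b hb => hF'b _ _ _ hb)

end TS

end Part6

section Part7
open scoped unitInterval Topology Topology.Homotopy ComplexConjugate

set_option linter.unusedSectionVars false

namespace TS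

/-- The coefficients of the Hopf projection. -/
noncomputable def hopfR (q : ℂ × ℝ) : ℝ := Real.sqrt (‖q.1‖ ^ 2 + q.2 ^ 2)

theorem hopfR_sq (q : ℂ × ℝ) : hopfR q ^ 2 = ‖q.1‖ ^ 2 + q.2 ^ 2 := Real.sq_sqrt (by positivity)

theorem hopfR_pos {q : ℂ × ℝ} (hq : q ≠ 0) : 0 < hopfR q := by
  apply Real.sqrt_pos.2
  by_contra! h
  have h1 : ‖q.1‖ ^ 2 = 0 := by nlinarith [sq_nonneg ‖q.1‖, sq_nonneg q.2]
  have h2 : q.2 ^ 2 = 0 := by nlinarith [sq_nonneg ‖q.1‖, sq_nonneg q.2]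
  exact hq (Prod.ext (by simpa using h1) (by simpa using h2))

theorem hopfR_continuous : Continuous hopfR := by unfold hopfR; fun_prop

/-- The line over a point. -/
def InLine (q : ℂ × ℝ) (v : ℂ × ℂ) : Prop :=
  ((hopfR q + q.2 : ℝ) : ℂ) * v.2 = conj q.1 * v.1 ∧ q.1 * v.2 = ((hopfR q - q.2 : ℝ) : ℂ) * v.1

/-- The coefficients of the projection to the line. -/
noncomputable def hopfC (q : ℂ × ℝ) : ℂ × ℂ × ℂ × ℂ :=
  (((hopfR q + q.2 : ℝ) : ℂ) / (2 * hopfR q : ℝ), q.1 / (2 * hopfR q : ℝ),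
   conj q.1 / (2 * hopfR q : ℝ), ((hopfR q - q.2 : ℝ) : ℂ) / (2 * hopfR q : ℝ))

/-- The projection. -/
noncomputable def hopfP (c : ℂ × ℂ × ℂ × ℂ) (v : ℂ × ℂ) : ℂ × ℂ :=
  (c.1 * v.1 + c.2.1 * v.2, c.2.2.1 * v.1 + c.2.2.2 * v.2)

theorem conj_mul_hopf (q : ℂ × ℝ) : q.1 * conj q.1 =
    ((hopfR q + q.2 : ℝ) : ℂ) * ((hopfR q - q.2 : ℝ) : ℂ) := by
  rw [Complex.mul_conj, Complex.normSq_eq_norm_sq, ← Complex.ofReal_mul]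
  congr 1
  have := hopfR_sq q
  linarith

theorem hopf_in {q : ℂ × ℝ} (hq : q ≠ 0) (v : ℂ × ℂ) : InLine q (hopfP (hopfC q) v) := by
  have hr : ((hopfR q : ℝ) : ℂ) ≠ 0 := by exact_mod_cast (hopfR_pos hq).ne'
  have h1 := conj_mul_hopf q
  simp only [InLine, hopfP, hopfC]
  push_cast at *
  constructor
  · field_simp
    linear_combination (-v.2) * h1
  · field_simp
    linear_combination (v.1) * h1

theorem hopf_fix {q : ℂ × ℝ} (hq : q ≠ 0) (v : ℂ × ℂ) (hv : InLine q v) :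
    hopfP (hopfC q) v = v := by
  have hr : ((hopfR q : ℝ) : ℂ) ≠ 0 := by exact_mod_cast (hopfR_pos hq).ne'
  obtain ⟨h1, h2⟩ := hv
  ext
  · simp only [hopfP, hopfC]
    push_cast at *
    field_simp
    linear_combination h2
  · simp only [hopfP, hopfC]
    push_cast at *
    field_simp
    linear_combination -h1

theorem hopf_ne {q : ℂ × ℝ} (hq : q ≠ 0) {v : ℂ × ℂ} (hv : InLine q v) (hv0 : v ≠ 0)
    {c : ℂ × ℂ × ℂ × ℂ} (hc : ‖c - hopfC q‖ < 1 / 4) : hopfP c v ≠ 0 := by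
  intro h0
  have hf := hopf_fix hq v hv
  set c' := hopfC q
  simp only [Prod.norm_def, Prod.fst_sub, Prod.snd_sub, max_lt_iff] at hc
  obtain ⟨k1, k2, k3, k4⟩ := hc
  have hm1 : ‖v.1‖ ≤ ‖v‖ := norm_fst_le v
  have hm2 : ‖v.2‖ ≤ ‖v‖ := norm_snd_le v
  have hvp : 0 < ‖v‖ := norm_pos_iff.2 hv0
  have e1 : v.1 = -((c.1 - c'.1) * v.1 + (c.2.1 - c'.2.1) * v.2) := by
    have a1 := congrArg Prod.fst h0
    have a2 := congrArg Prod.fst hf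
    simp only [hopfP, Prod.fst_zero] at a1 a2
    linear_combination -a2 + a1
  have e2 : v.2 = -((c.2.2.1 - c'.2.2.1) * v.1 + (c.2.2.2 - c'.2.2.2) * v.2) := by
    have a1 := congrArg Prod.snd h0
    have a2 := congrArg Prod.snd hf
    simp only [hopfP, Prod.snd_zero] at a1 a2
    linear_combination -a2 + a1
  have bd : ∀ x y : ℂ, ‖x‖ < 1 / 4 → ‖y‖ < 1 / 4 → ‖-(x * v.1 + y * v.2)‖ ≤ 1 / 2 * ‖v‖ := by
    intro x y hx hy
    rw [norm_neg]
    refine (norm_add_le _ _).trans ?_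
    rw [norm_mul, norm_mul]
    have := mul_le_mul hx.le hm1 (norm_nonneg _) (by norm_num)
    have := mul_le_mul hy.le hm2 (norm_nonneg _) (by norm_num)
    linarith
  have b1 := bd _ _ k1 k2
  have b2 := bd _ _ k3 k4
  rw [← e1] at b1
  rw [← e2] at b2
  have : ‖v‖ ≤ 1 / 2 * ‖v‖ := by rw [Prod.norm_def] at *; exact max_le b1 b2
  linarith

theorem hopfC_continuous {Z : Type*} [TopologicalSpace Z] {f : Z → ℂ × ℝ} (hf : Continuous f)
    (h0 : ∀ z, f z ≠ 0) : Continuous (fun z => hopfC (f z)) := by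
  have hR := hopfR_continuous.comp hf
  have hne : ∀ z, (((2 * hopfR (f z) : ℝ)) : ℂ) ≠ 0 := by
    intro z
    have := (hopfR_pos (h0 z)).ne'
    exact_mod_cast mul_ne_zero two_ne_zero this
  have hd : Continuous fun z => (((2 * hopfR (f z) : ℝ)) : ℂ) :=
    Complex.continuous_ofReal.comp (continuous_const.mul hR)
  simp only [hopfC]
  refine Continuous.prodMk (Continuous.div ?_ hd hne) (Continuous.prodMk (Continuous.div ?_ hd hne)
    (Continuous.prodMk (Continuous.div ?_ hd hne) (Continuous.div ?_ hd hne)))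
  · exact Complex.continuous_ofReal.comp (hR.add (by fun_prop))
  · fun_prop
  · exact Complex.continuous_conj.comp (by fun_prop)
  · exact Complex.continuous_ofReal.comp (hR.sub (by fun_prop))

/-- Lifting a homotopy to a family of vectors in the lines. -/
theorem hopf_lift {B : Type*} [TopologicalSpace B] [CompactSpace B] (S : Set B)
    (H : I × B → ℂ × ℝ) (hH : Continuous H)
    (h0 : ∀ q, H q ≠ 0) (h1 : ∀ b, H (1, b) = (1, 0)) (hS : ∀ t, ∀ b ∈ S, H (t, b) = (1, 0)) :
    ∃ v : B → ℂ × ℂ, Continuous v ∧ (∀ b, v b ≠ 0) ∧ (∀ b, InLine (H (0, b)) (v b)) ∧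
      ∀ b ∈ S, v b = (1, 1) := by
  have hR1 : hopfR (1, 0) = 1 := by simp [hopfR]
  have hone : hopfP (hopfC (1, 0)) (1, 1) = (1, 1) := by
    simp [hopfP, hopfC, hR1]; norm_num
  have hCc : Continuous (fun q : I × B => hopfC (H q)) := hopfC_continuous hH h0
  obtain ⟨N, hN⟩ : ∃ N : ℕ, ∀ u u' : I, |(u : ℝ) - u'| ≤ 1 / (N + 1) → ∀ b,
      ‖hopfC (H (u, b)) - hopfC (H (u', b))‖ < 1 / 4 := by
    let Φ : I → C(B, ℂ × ℂ × ℂ × ℂ) := fun u => ⟨fun b => hopfC (H (u, b)),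
      hCc.comp (by fun_prop : Continuous fun b => (u, b))⟩
    have hΦ : Continuous Φ := ContinuousMap.continuous_of_continuous_uncurry _ hCc
    have huc := CompactSpace.uniformContinuous_of_continuous hΦ
    obtain ⟨δ, hδ, hd⟩ := Metric.uniformContinuous_iff.1 huc (1 / 4) (by norm_num)
    obtain ⟨N, hN⟩ := exists_nat_one_div_lt hδ
    refine ⟨N, fun u u' huu b => ?_⟩
    have := hd (a := u) (b := u') (by rw [Subtype.dist_eq, Real.dist_eq]; exact huu.trans_lt hN)
    rw [← dist_eq_norm]
    exact (ContinuousMap.dist_apply_le_dist (f := Φ u) (g := Φ u') b).trans_lt this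
  have hmain : ∀ i : ℕ, i ≤ N + 1 → ∃ v : B → ℂ × ℂ, Continuous v ∧ (∀ b, v b ≠ 0) ∧
      (∀ b, InLine (H (pr (1 - (i : ℝ) / (N + 1)), b)) (v b)) ∧ ∀ b ∈ S, v b = (1, 1) := by
    intro i
    induction i with
    | zero =>
      intro _
      refine ⟨fun _ => (1, 1), continuous_const, fun _ => by simp, fun b => ?_, fun _ _ => rfl⟩
      simp only [Nat.cast_zero, zero_div, sub_zero, pr_one, h1]
      have := hopf_in (q := (1, 0)) (by simp) (1, 1)
      rwa [hone] at this
    | succ i ih =>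
      intro hi
      obtain ⟨v, hvc, hv0, hvl, hvS⟩ := ih (by omega)
      set u := pr (1 - (i : ℝ) / (N + 1)) with hu
      set u' := pr (1 - ((i + 1 : ℕ) : ℝ) / (N + 1)) with hu'
      have hm : ∀ j : ℕ, j ≤ N + 1 → (1 - (j : ℝ) / (N + 1)) ∈ Set.Icc (0 : ℝ) 1 := by
        intro j hj
        have : (j : ℝ) / (N + 1) ≤ 1 := by
          rw [div_le_one (by positivity)]; exact_mod_cast hj
        have : 0 ≤ (j : ℝ) / (N + 1) := by positivity
        constructor <;> linarith
      have hcl : |(u' : ℝ) - u| ≤ 1 / (N + 1) := by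
        rw [hu, hu', pr_val (hm i (by omega)), pr_val (hm (i + 1) hi)]
        push_cast
        rw [show (1 : ℝ) - (i + 1) / (N + 1) - (1 - i / (N + 1)) = -(1 / (N + 1)) by ring, abs_neg,
          abs_of_nonneg (by positivity)]
      refine ⟨fun b => hopfP (hopfC (H (u', b))) (v b), ?_, ?_, ?_, ?_⟩
      · have hC : Continuous fun b => hopfC (H (u', b)) :=
          hCc.comp (by fun_prop : Continuous fun b => (u', b))
        have hP : Continuous (fun z : (ℂ × ℂ × ℂ × ℂ) × (ℂ × ℂ) => hopfP z.1 z.2) := by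
          unfold hopfP; fun_prop
        exact hP.comp (hC.prodMk hvc)
      · intro b
        exact hopf_ne (h0 _) (hvl b) (hv0 b) (hN u' u hcl b)
      · intro b
        exact hopf_in (h0 _) _
      · intro b hb
        simp only [hS u' b hb, hvS b hb, hone]
  obtain ⟨v, h2, h3, h4, h5⟩ := hmain (N + 1) le_rfl
  refine ⟨v, h2, h3, fun b => ?_, h5⟩
  have := h4 b
  have e : (1 : ℝ) - ((N + 1 : ℕ) : ℝ) / (N + 1) = 0 := by
    push_cast; rw [div_self (by positivity), sub_self]
  rwa [e, pr_zero] at this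

theorem susp_inj_hopf {n : ℕ} (g : GenLoop (Fin n) ({0}ᶜ : Set ℂ) ⟨1, one_ne_zero⟩)
    (hg : GenLoop.Homotopic (susp g) GenLoop.const) :
    GenLoop.Homotopic g GenLoop.const := by
  obtain ⟨H, hHc, hHm, hH0, hH1, hHb⟩ := homotopic_sub_elim hg
  obtain ⟨v, hvc, hv0, hvl, hvb⟩ := hopf_lift (Cube.boundary (Fin (n + 1))) H hHc hHm
    (fun b => by rw [hH1]; rfl) (fun t b hb => by rw [hHb t b hb]; rfl)
  have hgc := loop_continuous g
  let q : (Fin n → I) → I → ℂ × ℝ := fun b s => sv (1 : ℂ) (g b) s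
  have hHq : ∀ b s, H (0, Fin.cons s b) = q b s := by
    intro b s; rw [hH0, susp_apply]; simp [q]
  have hqne : ∀ b s, q b s ≠ 0 := fun b s => sv_ne one_ne_zero (g b).2 s.2
  let V : (Fin n → I) → I → ℂ × ℂ := fun b s => v (Fin.cons s b)
  have hVl : ∀ b s, InLine (q b s) (V b s) := by
    intro b s; rw [← hHq]; exact hvl _
  have hV0 : ∀ b s, V b s ≠ 0 := fun b s => hv0 _
  have hplus : ∀ b (s : I), 1 / 2 ≤ (s : ℝ) → hopfR (q b s) + (q b s).2 ≠ 0 := by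
    intro b s hs h0
    have h1 := hopfR_sq (q b s)
    have h2 : (q b s).1 = 0 := by
      have : hopfR (q b s) = -(q b s).2 := by linarith
      rw [this] at h1
      have h3 : ‖(q b s).1‖ ^ 2 = 0 := by linarith
      simpa using h3
    have h3 := hopfR_pos (hqne b s)
    rcases sv_pos one_ne_zero (g b).2 s.2 h2 with h4 | h4
    · have : 0 < (q b s).2 := h4.2
      linarith
    · linarith [h4.1]
  have hminus : ∀ b (s : I), (s : ℝ) ≤ 1 / 2 → hopfR (q b s) - (q b s).2 ≠ 0 := by
    intro b s hs h0
    have h1 := hopfR_sq (q b s)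
    have h2 : (q b s).1 = 0 := by
      have : hopfR (q b s) = (q b s).2 := by linarith
      rw [this] at h1
      have h3 : ‖(q b s).1‖ ^ 2 = 0 := by linarith
      simpa using h3
    have h3 := hopfR_pos (hqne b s)
    rcases sv_pos one_ne_zero (g b).2 s.2 h2 with h4 | h4
    · linarith [h4.1]
    · have : (q b s).2 < 0 := h4.2
      linarith
  have hV1 : ∀ b (s : I), 1 / 2 ≤ (s : ℝ) → (V b s).1 ≠ 0 := by
    intro b s hs h0
    have h1 := (hVl b s).1
    rw [h0, mul_zero] at h1
    rcases mul_eq_zero.1 h1 with h1 | h1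
    · exact hplus b s hs (by exact_mod_cast h1)
    · exact hV0 b s (Prod.ext h0 h1)
  have hV2 : ∀ b (s : I), (s : ℝ) ≤ 1 / 2 → (V b s).2 ≠ 0 := by
    intro b s hs h0
    have h1 := (hVl b s).2
    rw [h0, mul_zero] at h1
    rcases mul_eq_zero.1 h1.symm with h1 | h1
    · exact hminus b s hs (by exact_mod_cast h1)
    · exact hV0 b s (Prod.ext h1 h0)
  let sp : I → I := fun u => pr ((1 + (u : ℝ)) / 2)
  let sm : I → I := fun u => pr ((1 - (u : ℝ)) / 2)
  have hsp : ∀ u : I, (sp u : ℝ) = (1 + (u : ℝ)) / 2 := fun u =>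
    pr_val (by constructor <;> linarith [u.2.1, u.2.2])
  have hsm : ∀ u : I, (sm u : ℝ) = (1 - (u : ℝ)) / 2 := fun u =>
    pr_val (by constructor <;> linarith [u.2.1, u.2.2])
  have hsp' : ∀ u : I, 1 / 2 ≤ (sp u : ℝ) := fun u => by rw [hsp]; linarith [u.2.1]
  have hsm' : ∀ u : I, (sm u : ℝ) ≤ 1 / 2 := fun u => by rw [hsm]; linarith [u.2.1]
  let cp : I × (Fin n → I) → ℂ := fun p =>
    (V p.2 (sp p.1)).1 / ((hopfR (q p.2 (sp p.1)) + (q p.2 (sp p.1)).2 : ℝ) : ℂ)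
  let cm : I × (Fin n → I) → ℂ := fun p =>
    (V p.2 (sm p.1)).2 / ((hopfR (q p.2 (sm p.1)) - (q p.2 (sm p.1)).2 : ℝ) : ℂ)
  have hspc : Continuous sp := by fun_prop
  have hsmc : Continuous sm := by fun_prop
  have hqc : ∀ w : I → I, Continuous w →
      Continuous (fun p : I × (Fin n → I) => q p.2 (w p.1)) := by
    intro w hw
    exact sv_cont _ (hgc.comp continuous_snd) (by fun_prop)
  have hVc : ∀ w : I → I, Continuous w →
      Continuous (fun p : I × (Fin n → I) => V p.2 (w p.1)) := by
    intro w hw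
    exact hvc.comp (cons_continuous (by fun_prop) continuous_snd)
  have hcp : Continuous cp := by
    refine Continuous.div (continuous_fst.comp (hVc sp hspc)) ?_ ?_
    · exact Complex.continuous_ofReal.comp
        ((hopfR_continuous.comp (hqc sp hspc)).add (continuous_snd.comp (hqc sp hspc)))
    · intro p; exact_mod_cast hplus _ _ (hsp' _)
  have hcm : Continuous cm := by
    refine Continuous.div (continuous_snd.comp (hVc sm hsmc)) ?_ ?_
    · exact Complex.continuous_ofReal.comp
        ((hopfR_continuous.comp (hqc sm hsmc)).sub (continuous_snd.comp (hqc sm hsmc)))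
    · intro p; exact_mod_cast hminus _ _ (hsm' _)
  have hcp0 : ∀ p, cp p ≠ 0 := fun p => div_ne_zero (hV1 _ _ (hsp' _))
    (by exact_mod_cast hplus _ _ (hsp' _))
  have hcm0 : ∀ p, cm p ≠ 0 := fun p => div_ne_zero (hV2 _ _ (hsm' _))
    (by exact_mod_cast hminus _ _ (hsm' _))
  have hR1 : hopfR (1, 0) = 1 := by simp [hopfR]
  have hbq : ∀ b s, (Fin.cons s b : Fin (n + 1) → I) ∈ Cube.boundary (Fin (n + 1)) →
      q b s = (1, 0) ∧ V b s = (1, 1) := by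
    intro b s hb
    refine ⟨?_, hvb _ hb⟩
    rw [← hHq, hHb _ _ hb]
    rfl
  have hb1 : ∀ p : I × (Fin n → I), (Fin.cons (sp p.1) p.2 : Fin (n + 1) → I) ∈ Cube.boundary (Fin (n + 1)) →
      cp p = 1 := by
    intro p hp
    simp only [cp, hbq _ _ hp, hR1]
    simp
  have hb2 : ∀ p : I × (Fin n → I), (Fin.cons (sm p.1) p.2 : Fin (n + 1) → I) ∈ Cube.boundary (Fin (n + 1)) →
      cm p = 1 := by
    intro p hp
    simp only [cm, hbq _ _ hp, hR1]
    simp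
  refine homotopic_sub _ _ (fun p => (((1 - (p.1 : ℝ)) * ‖(g p.2 : ℂ)‖ + p.1 : ℝ) : ℂ) *
    (cp p / cm p)) ?_ ?_ ?_ ?_ ?_
  · refine Continuous.mul ?_ (hcp.div hcm hcm0)
    refine Complex.continuous_ofReal.comp ?_
    have : Continuous fun p : I × (Fin n → I) => ‖(g p.2 : ℂ)‖ := (hgc.comp continuous_snd).norm
    fun_prop
  · intro p
    refine mul_ne_zero ?_ (div_ne_zero (hcp0 p) (hcm0 p))
    have h1 := p.1.2.1
    have h2 := p.1.2.2
    have h3 : 0 < ‖(g p.2 : ℂ)‖ := norm_pos_iff.2 (g p.2).2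
    have : 0 < (1 - (p.1 : ℝ)) * ‖(g p.2 : ℂ)‖ + p.1 := by
      rcases h1.eq_or_lt with h1 | h1
      · rw [← h1]; simpa using h3
      · have := mul_nonneg (sub_nonneg.2 h2) h3.le
        linarith
    exact_mod_cast this.ne'
  · intro b
    have hs0 : (sp 0 : ℝ) = 1 / 2 := by rw [hsp]; simp
    have hs1 : sm 0 = sp 0 := by
      apply Subtype.ext; rw [hsp, hsm]; simp
    have hq0 : q b (sp 0) = ((g b : ℂ), 0) := by
      simp only [q, hs0, sv_half]
    have hR : hopfR ((g b : ℂ), 0) = ‖(g b : ℂ)‖ := by simp [hopfR]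
    have h1 := (hVl b (sp 0)).2
    have h2 := hV2 b (sp 0) hs0.le
    have h3 : ((‖(g b : ℂ)‖ : ℝ) : ℂ) ≠ 0 := by
      exact_mod_cast (norm_pos_iff.2 (g b).2).ne'
    simp only [cp, cm, hs1, hq0, hR] at *
    simp only [add_zero, sub_zero, Set.Icc.coe_zero, one_mul] at *
    field_simp
    linear_combination -h1
  · intro b
    have hp1 : sp 1 = 1 := by apply Subtype.ext; rw [hsp]; norm_num
    have hm1 : sm 1 = 0 := by apply Subtype.ext; rw [hsm]; norm_num
    rw [hb1 (1, b) ⟨0, Or.inr (by simp [hp1])⟩, hb2 (1, b) ⟨0, Or.inl (by simp [hm1])⟩]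
    simp
  · intro t b hb
    have hbt : ∀ s, (Fin.cons s b : Fin (n + 1) → I) ∈ Cube.boundary (Fin (n + 1)) :=
      fun s => (bdry_iff _).2 (Or.inr (Or.inr (by simpa using hb)))
    rw [hb1 (t, b) (hbt _), hb2 (t, b) (hbt _)]
    simp only [loop_bdry g b hb]
    simp

end TS

end Part7

section Part8
open scoped unitInterval Topology Topology.Homotopy
set_option linter.unusedSectionVars false
namespace TS

/-- Version of `piIso_of` with a kernel hypothesis. -/
theorem piIso_of_ker {X Y : Type*} [TopologicalSpace X] [TopologicalSpace Y] {a b : ℕ} {x : X} {y : Y}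
    (T : GenLoop (Fin (a + 1)) X x → GenLoop (Fin (b + 1)) Y y)
    (hT : ∀ f g, GenLoop.Homotopic f g → GenLoop.Homotopic (T f) (T g))
    (i : Fin (a + 1)) (i' : Fin (b + 1))
    (hmul : ∀ f g, T (GenLoop.transAt i f g) = GenLoop.transAt i' (T f) (T g))
    (surj : ∀ g, ∃ f, GenLoop.Homotopic (T f) g)
    (inj : ∀ f, GenLoop.Homotopic (T f) GenLoop.const → GenLoop.Homotopic f GenLoop.const) :
    PiIso a X x b Y y := by
  let F : HomotopyGroup (Fin (a + 1)) X x → HomotopyGroup (Fin (b + 1)) Y y :=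
    Quotient.map T hT
  have hFm : ∀ p q, F (p * q) = F p * F q := by
    intro p q
    induction p using Quotient.inductionOn with
    | h f =>
    induction q using Quotient.inductionOn with
    | h g =>
      have e1 := HomotopyGroup.mul_spec (i := i) (p := f) (q := g)
      have e2 := HomotopyGroup.mul_spec (i := i') (p := T f) (q := T g)
      change F (((· * ·) : _ → _ → HomotopyGroup (Fin (a + 1)) X x) ⟦f⟧ ⟦g⟧) = 
        ((· * ·) : _ → _ → HomotopyGroup (Fin (b + 1)) Y y) ⟦T f⟧ ⟦T g⟧
      rw [e1, e2, ← hmul]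
      rfl
  let G : HomotopyGroup (Fin (a + 1)) X x →* HomotopyGroup (Fin (b + 1)) Y y := MonoidHom.mk' F hFm
  have hF : Function.Bijective G := by
    constructor
    · rw [injective_iff_map_eq_one]
      intro p
      induction p using Quotient.inductionOn
      intro h
      exact Quotient.sound (inj _ (Quotient.exact h))
    · intro q
      induction q using Quotient.inductionOn with
      | h g =>
        obtain ⟨f, hf⟩ := surj g
        exact ⟨Quotient.mk _ f, Quotient.sound hf⟩
  exact ⟨MulEquiv.ofBijective G hF⟩

theorem piIso_punctured {E F : Type} [NormedAddCommGroup E] [NormedSpace ℝ E] [FiniteDimensional ℝ E]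
    [NormedAddCommGroup F] [NormedSpace ℝ F] [FiniteDimensional ℝ F]
    (h : Module.finrank ℝ E = Module.finrank ℝ F) (a : ℕ) (e : ({0}ᶜ : Set E)) (f : ({0}ᶜ : Set F)) :
    PiIso a ({0}ᶜ : Set E) e a ({0}ᶜ : Set F) f := by
  let L : E ≃L[ℝ] F := ContinuousLinearEquiv.ofFinrankEq h
  have hL : L e ≠ 0 := (map_ne_zero_iff L L.injective).2 e.2
  obtain ⟨M, hM⟩ := SeparatingDual.exists_continuousLinearEquiv_apply_eq (R := ℝ) (V := F) hL f.2
  let N : E ≃L[ℝ] F := L.trans M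
  have hN : N e = f := hM
  refine piIso_of_homeo (N.toHomeomorph.subtype (p := fun x => x ∈ ({0}ᶜ : Set E)) (q := fun x => x ∈ ({0}ᶜ : Set F)) ?_) ?_
  · intro x; simp
  · exact Subtype.ext hN

theorem sphere (j : ℕ) : ∀ {E : Type} [NormedAddCommGroup E] [NormedSpace ℝ E] [FiniteDimensional ℝ E]
    (_ : Module.finrank ℝ E = j + 2) (e : ({0}ᶜ : Set E)),
    Nonempty (HomotopyGroup (Fin (j + 1)) ({0}ᶜ : Set E) e ≃* Multiplicative ℤ) := by
  induction j with
  | zero =>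
    intro E _ _ _ hE e
    obtain ⟨u⟩ := piIso_punctured (F := ℂ) (by simp [hE]) 0 e ⟨1, one_ne_zero⟩
    obtain ⟨v⟩ := pi1_punctured ⟨1, one_ne_zero⟩
    exact ⟨u.trans v⟩
  | succ j ih =>
    intro E _ _ _ hE e
    rcases Nat.eq_zero_or_pos j with rfl | hj
    · obtain ⟨v⟩ := ih (E := ℂ) (by simp) ⟨1, one_ne_zero⟩
      obtain ⟨u⟩ := piIso_punctured (F := ℂ × ℝ) (by simp [hE]) 1 e (sbase ⟨1, one_ne_zero⟩)
      obtain ⟨w⟩ : PiIso 0 ({0}ᶜ : Set ℂ) ⟨1, one_ne_zero⟩ 1 ({0}ᶜ : Set (ℂ × ℝ)) (sbase ⟨1, one_ne_zero⟩) :=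
        piIso_of_ker susp (fun _ _ => susp_homotopic) 0 (Fin.succ 0) (susp_trans 0)
          (susp_surj (a := 0) (by simp)) (fun f hf => susp_inj_hopf f (hf))
      exact ⟨(u.trans w.symm).trans v⟩
    · let E' := Fin (j + 2) → ℝ
      have e' : ({0}ᶜ : Set E') := ⟨fun _ => 1, fun h => one_ne_zero (congrFun h 0)⟩
      have hE' : Module.finrank ℝ E' = j + 2 := by simp [E']
      obtain ⟨v⟩ := ih (E := E') hE' e'
      obtain ⟨u⟩ := piIso_punctured (F := E' × ℝ) (by simp [hE, hE']) (j+1) e (sbase e')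
      obtain ⟨w⟩ : PiIso j ({0}ᶜ : Set E') e' (j+1) ({0}ᶜ : Set (E' × ℝ)) (sbase e') :=
        piIso_of susp (fun _ _ => susp_homotopic) 0 (Fin.succ 0) (susp_trans 0)
          (susp_surj hE') (susp_inj hE' hj)
      exact ⟨(u.trans w.symm).trans v⟩

end TS

end Part8

section Part9
open scoped unitInterval Topology Topology.Homotopy
set_option linter.unusedSectionVars false
namespace TS

section ThinLemmas
variable {E : Type*} [NormedAddCommGroup E] [NormedSpace ℝ E] [FiniteDimensional ℝ E]
variable {E' : Type*} [NormedAddCommGroup E'] [NormedSpace ℝ E'] [FiniteDimensional ℝ E']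
variable {F : Type*} [NormedAddCommGroup F] [NormedSpace ℝ F] [FiniteDimensional ℝ F]

theorem exists_surj {d : ℕ} (h : Module.finrank ℝ F ≤ d) :
    ∃ L : (Fin d → ℝ) →L[ℝ] F, Function.Surjective L := by
  let e : (Fin (Module.finrank ℝ F) → ℝ) ≃L[ℝ] F := ContinuousLinearEquiv.ofFinrankEq (by simp)
  let l : (Fin d → ℝ) →ₗ[ℝ] (Fin (Module.finrank ℝ F) → ℝ) := LinearMap.funLeft ℝ ℝ (Fin.castLE h)
  have hl : Function.Surjective l :=
    LinearMap.funLeft_surjective_of_injective ℝ ℝ _ (Fin.castLE_injective h)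
  refine ⟨(e : _ →L[ℝ] F).comp (LinearMap.toContinuousLinearMap l), ?_⟩
  exact e.surjective.comp hl

theorem Thin.of_param {ι : Type*} [Countable ι] {D : Set E} {d : ℕ} (h : Module.finrank ℝ F ≤ d)
    (p : ι → F → E) (hp : ∀ i, ContDiff ℝ 1 (p i)) (hD : ∀ x ∈ D, ∃ i v, p i v = x) : Thin D d := by
  obtain ⟨L, hL⟩ := exists_surj h
  rcases isEmpty_or_nonempty ι with hι | hι
  · refine ⟨fun _ _ => 0, fun _ => contDiff_const, fun x hx => ?_⟩
    obtain ⟨i, -⟩ := hD x hx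
    exact hι.elim i
  · obtain ⟨u, hu⟩ := exists_surjective_nat ι
    refine ⟨fun n v => p (u n) (L v), fun n => (hp _).comp L.contDiff, fun x hx => ?_⟩
    obtain ⟨i, v, rfl⟩ := hD x hx
    obtain ⟨n, rfl⟩ := hu i
    obtain ⟨w, rfl⟩ := hL v
    exact Set.mem_iUnion.2 ⟨n, w, rfl⟩

theorem Thin.prod {D : Set E} {D' : Set E'} {d d' : ℕ} (h : Thin D d) (h' : Thin D' d') :
    Thin (D ×ˢ D') (d + d') := by
  obtain ⟨p, hp, hD⟩ := h
  obtain ⟨p', hp', hD'⟩ := h'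
  refine Thin.of_param (ι := ℕ × ℕ) (F := (Fin d → ℝ) × (Fin d' → ℝ)) (by simp)
    (fun n v => (p n.1 v.1, p' n.2 v.2)) (fun n => ?_) ?_
  · exact ((hp _).comp contDiff_fst).prodMk ((hp' _).comp contDiff_snd)
  · rintro ⟨x, x'⟩ ⟨hx, hx'⟩
    obtain ⟨n, v, hv⟩ := Set.mem_iUnion.1 (hD hx)
    obtain ⟨n', v', hv'⟩ := Set.mem_iUnion.1 (hD' hx')
    exact ⟨(n, n'), (v, v'), Prod.ext hv hv'⟩

theorem Thin.pi {s : ℕ} {V : Fin s → Type*} [∀ i, NormedAddCommGroup (V i)]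
    [∀ i, NormedSpace ℝ (V i)] [∀ i, FiniteDimensional ℝ (V i)] {D : ∀ i, Set (V i)}
    {d : Fin s → ℕ} (h : ∀ i, Thin (D i) (d i)) : Thin {x : ∀ i, V i | ∀ i, x i ∈ D i} (∑ i, d i) := by
  choose p hp hD using h
  refine Thin.of_param (ι := Fin s → ℕ) (F := ∀ i, (Fin (d i) → ℝ))
    (by simp [Module.finrank_pi_fintype])
    (fun n v i => p i (n i) (v i)) (fun n => ?_) ?_
  · refine contDiff_pi.2 fun i => (hp i _).comp
      (ContinuousLinearMap.proj (R := ℝ) (φ := fun i => Fin (d i) → ℝ) i).contDiff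
  · intro x hx
    have : ∀ i, ∃ n v, p i n v = x i := fun i => by
      obtain ⟨n, v, hv⟩ := Set.mem_iUnion.1 (hD i (hx i))
      exact ⟨n, v, hv⟩
    choose n v hv using this
    exact ⟨n, v, funext hv⟩

theorem Thin.zero : Thin ({0} : Set E) 0 :=
  Thin.of_param (ι := Unit) (F := Fin 0 → ℝ) (by simp) (fun _ _ => 0) (fun _ => contDiff_const)
    (fun x hx => ⟨(), 0, hx.symm⟩)

theorem Thin.mono {D D' : Set E} {d : ℕ} (h : Thin D d) (hD : D' ⊆ D) : Thin D' d := by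
  obtain ⟨p, hp, hD'⟩ := h
  exact ⟨p, hp, hD.trans hD'⟩

end ThinLemmas

/-- The space of `m × n` matrices, as families of columns. -/
abbrev Col (m n : ℕ) := Fin n → Fin m → ℂ

theorem finrank_col (m n : ℕ) : Module.finrank ℝ (Col m n) = 2 * (n * m) := by
  simp [Col, Module.finrank_pi_fintype, Complex.finrank_real_complex]
  ring

/-- Degenerate matrices. -/
def Dg (m n : ℕ) : Set (Col m n) := {A | ¬ LinearIndependent ℂ A}

theorem thin_Dg (m n : ℕ) : Thin (Dg m (n + 1)) (2 * (n * m) + 2 * n) := by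
  refine Thin.of_param (ι := Fin (n + 1)) (F := Col m n × (Fin n → ℂ)) ?_
    (fun i v => Fin.insertNth (α := fun _ => Fin m → ℂ) i (∑ l, v.2 l • v.1 l) v.1) (fun i => ?_) ?_
  · rw [Module.finrank_prod, finrank_col]
    simp [Module.finrank_pi_fintype, Complex.finrank_real_complex]
    omega
  · refine contDiff_pi.2 fun j => ?_
    rcases Fin.eq_self_or_eq_succAbove i j with rfl | ⟨l, rfl⟩
    · simp only [Fin.insertNth_apply_same]
      refine ContDiff.sum fun l _ => ?_
      have h1 : ContDiff ℝ 1 (fun v : Col m n × (Fin n → ℂ) => v.2 l) :=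
        (contDiff_apply _ _ l).comp contDiff_snd
      have h2 : ContDiff ℝ 1 (fun v : Col m n × (Fin n → ℂ) => v.1 l) :=
        (contDiff_apply _ _ l).comp contDiff_fst
      exact h1.smul h2
    · simp only [Fin.insertNth_apply_succAbove]
      exact (contDiff_apply _ _ l).comp contDiff_fst
  · intro A hA
    simp only [Dg, Set.mem_ofPred_eq, linearIndependent_iff_notMem_span, not_forall, not_not] at hA
    obtain ⟨i, hi⟩ := hA
    have : A '' (Set.univ \ {i}) = Set.range (fun l => A (i.succAbove l)) := by
      ext z; constructor
      · rintro ⟨j, hj, rfl⟩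
        rcases Fin.eq_self_or_eq_succAbove i j with rfl | ⟨l, rfl⟩
        · simp at hj
        · exact ⟨l, rfl⟩
      · rintro ⟨l, rfl⟩
        exact ⟨_, by simp [Fin.succAbove_ne], rfl⟩
    rw [this, Submodule.mem_span_range_iff_exists_fun] at hi
    obtain ⟨c, hc⟩ := hi
    refine ⟨i, (fun l => A (i.succAbove l), c), ?_⟩
    rw [Fin.insertNth_eq_iff]
    exact ⟨hc, rfl⟩

theorem isOpen_li (m n : ℕ) : IsOpen {A : Col m n | LinearIndependent ℂ A} :=
  isOpen_setOfPred_linearIndependent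

theorem isClosed_Dg (m n : ℕ) : IsClosed (Dg m n) := (isOpen_li m n).isClosed_compl

end TS

end Part9

section Part10
open scoped unitInterval Topology Topology.Homotopy ComplexConjugate
set_option linter.unusedSectionVars false
namespace TS

section Rot
variable {m n : ℕ}

/-- Squared norm of the tail. -/
noncomputable def nn (c : Fin (m + 1) → ℂ) : ℝ := ∑ i : Fin m, ‖c i.succ‖ ^ 2
/-- Auxiliary coefficient. -/
noncomputable def al (c : Fin (m + 1) → ℂ) : ℂ :=
  (conj (c 0) + (‖c 0‖ : ℝ)) / 2 + ((nn c / (1 + ‖c 0‖) : ℝ) : ℂ)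
/-- Auxiliary coefficient. -/
noncomputable def de (c : Fin (m + 1) → ℂ) : ℂ := c 0 * al c + (nn c : ℝ)
/-- Hermitian product of the tails. -/
noncomputable def ip (c x : Fin (m + 1) → ℂ) : ℂ := ∑ i : Fin m, conj (c i.succ) * x i.succ

/-- The linear map taking `c` to a multiple of the first basis vector. -/
noncomputable def Rl (c : Fin (m + 1) → ℂ) : (Fin (m + 1) → ℂ) →ₗ[ℂ] (Fin (m + 1) → ℂ) where
  toFun x := Fin.cons (al c ^ 2 * x 0 + al c * ip c x)
    (fun i => - al c * x 0 * c i.succ + de c * x i.succ - ip c x * c i.succ)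
  map_add' x y := by
    have h : ip c (x + y) = ip c x + ip c y := by
      simp [ip, mul_add, Finset.sum_add_distrib]
    funext i
    refine Fin.cases ?_ (fun i => ?_) i
    · simp [h]; ring
    · simp [h]; ring
  map_smul' r x := by
    have h : ip c (r • x) = r * ip c x := by
      simp only [ip, Finset.mul_sum, Pi.smul_apply, smul_eq_mul]
      exact Finset.sum_congr rfl fun i _ => by ring
    funext i
    refine Fin.cases ?_ (fun i => ?_) i
    · simp [h]; ring
    · simp [h]; ring

theorem Rl_zero (c x : Fin (m + 1) → ℂ) : Rl c x 0 = al c ^ 2 * x 0 + al c * ip c x := rfl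
theorem Rl_succ (c x : Fin (m + 1) → ℂ) (i : Fin m) :
    Rl c x i.succ = - al c * x 0 * c i.succ + de c * x i.succ - ip c x * c i.succ := rfl

/-- The slit domain. -/
def Sl (m : ℕ) : Set (Fin (m + 1) → ℂ) := {c | Fin.tail c ≠ 0 ∨ c 0 ∈ Complex.slitPlane}

/-- First basis vector. -/
def e1 (m : ℕ) : Fin (m + 1) → ℂ := Fin.cons 1 0

@[simp] theorem e1_zero : e1 m 0 = 1 := rfl
@[simp] theorem e1_succ (i : Fin m) : e1 m i.succ = 0 := rfl

theorem nn_nonneg (c : Fin (m + 1) → ℂ) : 0 ≤ nn c := Finset.sum_nonneg fun _ _ => by positivity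
theorem nn_pos {c : Fin (m + 1) → ℂ} (h : Fin.tail c ≠ 0) : 0 < nn c := by
  obtain ⟨i, hi⟩ := Function.ne_iff.1 h
  refine Finset.sum_pos' (fun _ _ => by positivity) ⟨i, Finset.mem_univ _, ?_⟩
  have : 0 < ‖c i.succ‖ := norm_pos_iff.2 hi
  positivity

theorem slit_pos {a : ℂ} (h : a ∈ Complex.slitPlane) : 0 < a.re + ‖a‖ := by
  rcases h with h | h
  · have := norm_nonneg a; linarith
  · have := Complex.abs_re_lt_norm.2 h
    linarith [neg_abs_le a.re]

theorem re_norm (a : ℂ) : 0 ≤ a.re + ‖a‖ := by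
  linarith [neg_abs_le a.re, Complex.abs_re_le_norm a]

theorem al_re (c : Fin (m + 1) → ℂ) : (al c).re = ((c 0).re + ‖c 0‖) / 2 + nn c / (1 + ‖c 0‖) := by
  simp only [al, Complex.add_re, Complex.ofReal_re]
  congr 1
  have : ((conj (c 0) + ((‖c 0‖ : ℝ) : ℂ)) / 2).re = (conj (c 0) + ((‖c 0‖ : ℝ) : ℂ)).re / 2 := by
    simp
  rw [this]; simp

theorem de_eq (c : Fin (m + 1) → ℂ) : de c = ((‖c 0‖ / 2 : ℝ) : ℂ) * (c 0 + (‖c 0‖ : ℝ)) +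
    ((nn c / (1 + ‖c 0‖) : ℝ) : ℂ) * (c 0 + (1 + ‖c 0‖ : ℝ)) := by
  have h : c 0 * conj (c 0) = (‖c 0‖ : ℂ) ^ 2 := by
    rw [Complex.mul_conj, Complex.normSq_eq_norm_sq]; push_cast; ring
  have h2 : (1 + (‖c 0‖ : ℂ)) ≠ 0 := by
    have : (0 : ℝ) < 1 + ‖c 0‖ := by positivity
    exact_mod_cast this.ne'
  simp only [de, al]
  push_cast
  field_simp
  linear_combination (1 + (‖c 0‖ : ℂ)) * h

theorem de_re (c : Fin (m + 1) → ℂ) : (de c).re = ‖c 0‖ / 2 * ((c 0).re + ‖c 0‖) +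
    nn c / (1 + ‖c 0‖) * ((c 0).re + (1 + ‖c 0‖)) := by
  rw [de_eq, Complex.add_re, Complex.re_ofReal_mul, Complex.re_ofReal_mul, Complex.add_re,
    Complex.add_re, Complex.ofReal_re, Complex.ofReal_re]

theorem al_ne {c : Fin (m + 1) → ℂ} (h : c ∈ Sl m) : al c ≠ 0 := by
  suffices 0 < (al c).re from fun h' => by rw [h'] at this; simp at this
  rw [al_re]
  have h1 := re_norm (c 0)
  have h0 := nn_nonneg c
  have h3 := norm_nonneg (c 0)
  rcases h with h | h
  · have := nn_pos h
    positivity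
  · have := slit_pos h
    positivity

theorem de_ne {c : Fin (m + 1) → ℂ} (h : c ∈ Sl m) : de c ≠ 0 := by
  suffices 0 < (de c).re from fun h' => by rw [h'] at this; simp at this
  rw [de_re]
  have h1 := re_norm (c 0)
  have h0 := nn_nonneg c
  have h3 := norm_nonneg (c 0)
  have h4 : 0 < (c 0).re + (1 + ‖c 0‖) := by linarith
  rcases h with h | h
  · have := nn_pos h
    positivity
  · have := slit_pos h
    have : 0 < ‖c 0‖ := by
      rw [norm_pos_iff]; rintro h'; rw [h'] at h; simp at h
    positivity

theorem Rl_inj {c : Fin (m + 1) → ℂ} (h : c ∈ Sl m) : LinearMap.ker (Rl c) = ⊥ := by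
  rw [LinearMap.ker_eq_bot']
  intro x hx
  have ha := al_ne h
  have hd := de_ne h
  have h0 : al c * x 0 + ip c x = 0 := by
    have := congrFun hx 0
    rw [Rl_zero] at this
    have h2 : al c * (al c * x 0 + ip c x) = 0 := by
      simp only [Pi.zero_apply] at this
      linear_combination this
    exact (mul_eq_zero.1 h2).resolve_left ha
  have hs : ∀ i : Fin m, x i.succ = 0 := by
    intro i
    have := congrFun hx i.succ
    rw [Rl_succ] at this
    have h2 : de c * x i.succ = 0 := by
      simp only [Pi.zero_apply] at this
      linear_combination this + c i.succ * h0
    exact (mul_eq_zero.1 h2).resolve_left hd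
  have hi : ip c x = 0 := by simp [ip, hs]
  rw [hi, add_zero] at h0
  funext i
  refine Fin.cases ?_ hs i
  exact (mul_eq_zero.1 h0).resolve_left ha

theorem ip_self (c : Fin (m + 1) → ℂ) : ip c c = (nn c : ℝ) := by
  simp only [ip, nn]
  push_cast
  refine Finset.sum_congr rfl fun i _ => ?_
  rw [mul_comm, Complex.mul_conj, Complex.normSq_eq_norm_sq]; push_cast; rfl

theorem Rl_self (c : Fin (m + 1) → ℂ) : Rl c c = Fin.cons (al c * de c) 0 := by
  funext i
  refine Fin.cases ?_ (fun i => ?_) i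
  · rw [Rl_zero, ip_self, de]; simp; ring
  · rw [Rl_succ, ip_self, de]; simp; ring

theorem nn_e1 : nn (e1 m) = 0 := by simp [nn]
theorem al_e1 : al (e1 m) = 1 := by simp [al, nn_e1]
theorem de_e1 : de (e1 m) = 1 := by simp [de, al_e1, nn_e1]

theorem Rl_e1 (x : Fin (m + 1) → ℂ) : Rl (e1 m) x = x := by
  funext i
  have : ip (e1 m) x = 0 := by simp [ip]
  refine Fin.cases ?_ (fun i => ?_) i
  · rw [Rl_zero, this, al_e1]; simp
  · rw [Rl_succ, this, de_e1]; simp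

theorem nn_continuous : Continuous (nn (m := m)) := by unfold nn; fun_prop
theorem al_continuous : Continuous (al (m := m)) := by
  have := nn_continuous (m := m)
  unfold al
  have h : ∀ c : Fin (m + 1) → ℂ, 1 + ‖c 0‖ ≠ 0 := fun c => by positivity
  fun_prop (disch := exact h _)
theorem de_continuous : Continuous (de (m := m)) := by
  have := nn_continuous (m := m)
  have := al_continuous (m := m)
  unfold de
  fun_prop

theorem Rl_continuous {Z : Type*} [TopologicalSpace Z] {f g : Z → Fin (m + 1) → ℂ}
    (hf : Continuous f) (hg : Continuous g) : Continuous (fun z => Rl (f z) (g z)) := by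
  have h1 := al_continuous.comp hf
  have h2 := de_continuous.comp hf
  simp only [Function.comp_def] at h1 h2
  have h3 : Continuous (fun z => ip (f z) (g z)) := by unfold ip; fun_prop
  refine continuous_pi fun i => ?_
  refine Fin.cases ?_ (fun i => ?_) i
  · simp only [Rl_zero]; fun_prop
  · simp only [Rl_succ]; fun_prop

theorem isOpen_Sl : IsOpen (Sl m) := by
  have h1 : Continuous (fun c : Fin (m + 1) → ℂ => Fin.tail c) := by
    unfold Fin.tail; fun_prop
  have h2 : Continuous (fun c : Fin (m + 1) → ℂ => c 0) := by fun_prop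
  exact (isOpen_ne_fun h1 continuous_const).union (Complex.isOpen_slitPlane.preimage h2)

theorem e1_mem : e1 m ∈ Sl m := Or.inr (by simp)

theorem Sl_star {c : Fin (m + 1) → ℂ} (h : c ∈ Sl m) (t : I) :
    (1 - (t : ℝ)) • e1 m + (t : ℝ) • c ∈ Sl m := by
  rcases t.2.1.eq_or_lt with ht | ht
  · rw [← ht]; simpa using e1_mem
  rcases h with h | h
  · left
    obtain ⟨i, hi⟩ := Function.ne_iff.1 h
    refine Function.ne_iff.2 ⟨i, ?_⟩
    have : c i.succ ≠ 0 := hi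
    simp [Fin.tail, ht.ne', this]
  · right
    have := Complex.starConvex_one_slitPlane h (a := 1 - (t : ℝ)) (b := t) (by linarith [t.2.2]) ht.le (by ring)
    simpa using this

theorem li_of_tail {A : Col (m + 1) (n + 1)} {p : ℂ} (hp : p ≠ 0) (h0 : A 0 = Fin.cons p 0)
    (h : LinearIndependent ℂ (fun l : Fin n => Fin.tail (A l.succ))) : LinearIndependent ℂ A := by
  rw [Fintype.linearIndependent_iff] at h ⊢
  intro g hg
  rw [Fin.sum_univ_succ, h0] at hg
  have hs : ∀ l : Fin n, g l.succ = 0 := by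
    refine h (fun l => g l.succ) ?_
    funext i
    have := congrFun hg i.succ
    simpa [Finset.sum_apply, Fin.tail] using this
  have := congrFun hg 0
  simp [hs, hp] at this
  exact fun i => Fin.cases this hs i

theorem tail_of_li {A : Col (m + 1) (n + 1)} {p : ℂ} (hp : p ≠ 0) (h0 : A 0 = Fin.cons p 0)
    (h : LinearIndependent ℂ A) : LinearIndependent ℂ (fun l : Fin n => Fin.tail (A l.succ)) := by
  rw [Fintype.linearIndependent_iff] at h ⊢
  intro g hg
  have := h (Fin.cons (-(∑ l, g l * A l.succ 0) / p) g) ?_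
  · intro l; simpa using this l.succ
  · rw [Fin.sum_univ_succ, h0]
    funext i
    refine Fin.cases ?_ (fun i => ?_) i
    · simp [Finset.sum_apply, hp]
    · have := congrFun hg i
      simpa [Finset.sum_apply, Fin.tail] using this

/-- Stabilization. -/
def stab (B : Col m n) : Col (m + 1) (n + 1) := Fin.cons (e1 m) (fun l => Fin.cons 0 (B l))

@[simp] theorem stab_zero (B : Col m n) : stab B 0 = e1 m := rfl
theorem stab_succ (B : Col m n) (l : Fin n) : stab B l.succ = Fin.cons 0 (B l) := rfl
theorem tail_stab (B : Col m n) : (fun l : Fin n => Fin.tail (stab B l.succ)) = B := rfl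

theorem stab_li {B : Col m n} (h : LinearIndependent ℂ B) : LinearIndependent ℂ (stab B) :=
  li_of_tail one_ne_zero rfl (by rwa [tail_stab])

/-- The matrix with first column `p e₁`, top row `b` and block `B`. -/
def blk (p : ℂ) (b : Fin n → ℂ) (B : Col m n) : Col (m + 1) (n + 1) :=
  Fin.cons (Fin.cons p 0) (fun l => Fin.cons (b l) (B l))

theorem blk_continuous {Z : Type*} [TopologicalSpace Z] {f : Z → ℂ} {g : Z → Fin n → ℂ} {h : Z → Col m n}
    (hf : Continuous f) (hg : Continuous g) (hh : Continuous h) :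
    Continuous (fun z => blk (f z) (g z) (h z)) := by
  refine continuous_pi fun l => continuous_pi fun i => ?_
  refine Fin.cases ?_ (fun l => ?_) l
  · refine Fin.cases ?_ (fun i => ?_) i
    · simpa [blk] using hf
    · simpa [blk] using continuous_const
  · refine Fin.cases ?_ (fun i => ?_) i
    · simp only [blk, Fin.cons_succ, Fin.cons_zero]; fun_prop
    · simp only [blk, Fin.cons_succ]; fun_prop

theorem blk_li {p : ℂ} (hp : p ≠ 0) (b : Fin n → ℂ) {B : Col m n} (h : LinearIndependent ℂ B) :
    LinearIndependent ℂ (blk p b B) := li_of_tail hp rfl h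

theorem stab_eq_blk (B : Col m n) : stab B = blk 1 0 B := rfl

end Rot

end TS

end Part10

section Part11
open scoped unitInterval Topology Topology.Homotopy ComplexConjugate
set_option linter.unusedSectionVars false
namespace TS

section Red
variable {V : Type} [NormedAddCommGroup V] [NormedSpace ℝ V] [FiniteDimensional ℝ V]
variable {m n : ℕ}

/-- The space of pairs with a non degenerate component. -/
def Wd (m n : ℕ) (D : Set V) : Set (Col m n × V) := {p | LinearIndependent ℂ p.1 ∨ p.2 ∉ D}

/-- The slit version. -/
def Wz (m n : ℕ) (D : Set V) : Set (Col (m + 1) (n + 1) × V) :=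
  {p | (LinearIndependent ℂ p.1 ∧ p.1 0 ∈ Sl m) ∨ p.2 ∉ D}

theorem isOpen_Wd {D : Set V} (hD : IsClosed D) : IsOpen (Wd m n D) :=
  ((isOpen_li m n).preimage continuous_fst).union (hD.isOpen_compl.preimage continuous_snd)

theorem isOpen_Wz {D : Set V} (hD : IsClosed D) : IsOpen (Wz m n D) := by
  refine IsOpen.union (IsOpen.inter ((isOpen_li _ _).preimage continuous_fst) ?_)
    (hD.isOpen_compl.preimage continuous_snd)
  have : Continuous (fun p : Col (m + 1) (n + 1) × V => p.1 0) := by fun_prop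
  exact isOpen_Sl.preimage this

theorem Wz_sub (m n : ℕ) (D : Set V) : Wz m n D ⊆ Wd (m + 1) (n + 1) D := by
  rintro p (h | h)
  · exact Or.inl h.1
  · exact Or.inr h

theorem thin_slit (m n : ℕ) {D : Set V} {d : ℕ} (hD : Thin D d) :
    Thin ({A : Col (m + 1) (n + 1) | A 0 ∉ Sl m} ×ˢ D) (1 + 2 * (n * (m + 1)) + d) := by
  refine Thin.prod ?_ hD
  refine Thin.of_param (ι := Unit) (F := ℝ × Col (m + 1) n) ?_
    (fun _ v => Fin.cons (Fin.cons (v.1 : ℂ) 0) v.2) (fun _ => ?_) ?_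
  · rw [Module.finrank_prod, finrank_col]; simp
  · refine contDiff_pi.2 fun l => ?_
    refine Fin.cases ?_ (fun l => ?_) l
    · simp only [Fin.cons_zero]
      refine contDiff_pi.2 fun i => ?_
      refine Fin.cases ?_ (fun i => ?_) i
      · simp only [Fin.cons_zero]
        exact Complex.ofRealCLM.contDiff.comp contDiff_fst
      · simpa using contDiff_const
    · simp only [Fin.cons_succ]
      exact (contDiff_apply _ _ l).comp contDiff_snd
  · intro A hA
    have h1 : Fin.tail (A 0) = 0 := by
      by_contra h; exact hA (Or.inl h)
    have h2 : A 0 0 ∉ Complex.slitPlane := fun h => hA (Or.inr h)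
    have h3 : ((A 0 0).re : ℂ) = A 0 0 := by
      rw [Complex.mem_slitPlane_iff] at h2
      push Not at h2
      apply Complex.ext <;> simp [h2.2]
    refine ⟨(), ((A 0 0).re, Fin.tail A), ?_⟩
    simp only [h3]
    rw [← h1]
    simp

/-- The retraction. -/
noncomputable def rr (A : Col (m + 1) (n + 1)) : Col m n := fun l => Fin.tail (Rl (A 0) (A l.succ))

theorem rr_continuous : Continuous (rr (m := m) (n := n)) := by
  refine continuous_pi fun l => continuous_pi fun i => ?_
  have := Rl_continuous (Z := Col (m + 1) (n + 1)) (f := fun A => A 0) (g := fun A => A l.succ)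
    (by fun_prop) (by fun_prop)
  exact (continuous_apply i.succ).comp this

theorem rr_li {A : Col (m + 1) (n + 1)} (h : LinearIndependent ℂ A) (hs : A 0 ∈ Sl m) :
    LinearIndependent ℂ (rr A) := by
  have h1 := h.map' (Rl (A 0)) (Rl_inj hs)
  exact tail_of_li (A := fun l => Rl (A 0) (A l)) (mul_ne_zero (al_ne hs) (de_ne hs)) (Rl_self _) h1

theorem rr_stab (B : Col m n) : rr (stab B) = B := by
  funext l
  simp only [rr, stab_zero, Rl_e1]
  rfl

theorem stab_continuous : Continuous (stab (m := m) (n := n)) := by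
  simp only [funext stab_eq_blk]
  exact blk_continuous continuous_const continuous_const continuous_id

/-- Stabilization of pairs. -/
def stabW (D : Set V) (p : Wd m n D) : Wd (m + 1) (n + 1) D :=
  ⟨(stab p.1.1, p.1.2), p.2.imp stab_li id⟩

/-- Stabilization into the slit space. -/
def stabZ (D : Set V) (p : Wd m n D) : Wz m n D :=
  ⟨(stab p.1.1, p.1.2), p.2.imp (fun h => ⟨stab_li h, e1_mem⟩) id⟩

/-- Retraction of pairs. -/
noncomputable def rrW (D : Set V) (p : Wz m n D) : Wd m n D :=
  ⟨(rr p.1.1, p.1.2), p.2.imp (fun h => rr_li h.1 h.2) id⟩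

theorem stabW_continuous (D : Set V) : Continuous (stabW (m := m) (n := n) D) := by
  have := stab_continuous (m := m) (n := n)
  refine Continuous.subtype_mk ?_ _
  fun_prop

theorem stabZ_continuous (D : Set V) : Continuous (stabZ (m := m) (n := n) D) := by
  have := stab_continuous (m := m) (n := n)
  refine Continuous.subtype_mk ?_ _
  fun_prop

theorem rrW_continuous (D : Set V) : Continuous (rrW (m := m) (n := n) D) := by
  have := rr_continuous (m := m) (n := n)
  refine Continuous.subtype_mk ?_ _
  fun_prop

theorem rrW_stabZ (D : Set V) (p : Wd m n D) : rrW D (stabZ D p) = p :=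
  Subtype.ext (Prod.ext (rr_stab _) rfl)

theorem homotopic_stab_rr (D : Set V) {N : ℕ} (x : Wd m n D) (f : GenLoop (Fin N) (Wz m n D) (stabZ D x)) :
    GenLoop.Homotopic
      (gmap (stabW D) (stabW_continuous D) rfl (gmap (rrW D) (rrW_continuous D) (rrW_stabZ D x) f))
      (gmap (Set.inclusion (Wz_sub m n D)) (continuous_inclusion _) (y := stabW D x) rfl f) := by
  have hfc := loop_continuous f
  have hA : Continuous (fun y => (f y).1.1) := continuous_fst.comp hfc
  have hv : Continuous (fun y => (f y).1.2) := continuous_snd.comp hfc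
  have hb : ∀ y ∈ Cube.boundary (Fin N), (f y).1.1 = stab x.1.1 ∧ (f y).1.2 = x.1.2 := by
    intro y hy
    have := loop_bdry f y hy
    rw [this]
    exact ⟨rfl, rfl⟩
  let M : GenLoop (Fin N) (Wd (m + 1) (n + 1) D) (stabW D x) :=
    loopSub (fun y => ((fun l => Rl ((f y).1.1 0) ((f y).1.1 l)), (f y).1.2)) (by
      refine Continuous.prodMk (continuous_pi fun l => Rl_continuous ?_ ?_) hv <;> fun_prop) (by
      intro y
      refine (f y).2.imp (fun h => ?_) id
      exact h.1.map' (Rl ((f y).1.1 0)) (Rl_inj h.2)) (by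
      intro y hy
      obtain ⟨h1, h2⟩ := hb y hy
      rw [h1, h2]
      simp only [stab_zero, Rl_e1]
      rfl)
  have hMy : ∀ y, (M y : Col (m + 1) (n + 1) × V) = ((fun l => Rl ((f y).1.1 0) ((f y).1.1 l)), (f y).1.2) :=
    fun _ => rfl
  have e2 : GenLoop.Homotopic M
      (gmap (Set.inclusion (Wz_sub m n D)) (continuous_inclusion _) (y := stabW D x) rfl f) := by
    apply GenLoop.Homotopic.symm
    refine homotopic_sub _ _ (fun p => ((fun l => Rl ((1 - (p.1 : ℝ)) • e1 m + (p.1 : ℝ) • (f p.2).1.1 0)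
      ((f p.2).1.1 l)), (f p.2).1.2)) ?_ ?_ ?_ ?_ ?_
    · refine Continuous.prodMk (continuous_pi fun l => Rl_continuous ?_ ?_) (hv.comp continuous_snd)
      · have : Continuous (fun p : I × (Fin N → I) => (f p.2).1.1 0) :=
          (continuous_apply 0).comp (hA.comp continuous_snd)
        fun_prop
      · exact (continuous_apply l).comp (hA.comp continuous_snd)
    · rintro ⟨t, y⟩
      refine (f y).2.imp (fun h => ?_) id
      exact h.1.map' _ (Rl_inj (Sl_star h.2 t))
    · intro y
      simp only [Set.Icc.coe_zero, sub_zero, one_smul, zero_smul, add_zero, Rl_e1]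
      rfl
    · intro y
      simp only [Set.Icc.coe_one, sub_self, one_smul, zero_smul, zero_add]
      rfl
    · intro t y hy
      obtain ⟨h1, h2⟩ := hb y hy
      simp only [h1, h2, stab_zero]
      have : (1 - (t : ℝ)) • e1 m + (t : ℝ) • e1 m = e1 m := by
        rw [← add_smul]; simp
      simp only [this, Rl_e1]
      rfl
  refine GenLoop.Homotopic.trans ?_ e2
  let c : I × (Fin N → I) → (Fin (m + 1) → ℂ) :=
    fun p => (1 - (p.1 : ℝ)) • e1 m + (p.1 : ℝ) • (f p.2).1.1 0
  have hc : Continuous c := by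
    have : Continuous (fun p : I × (Fin N → I) => (f p.2).1.1 0) :=
          (continuous_apply 0).comp (hA.comp continuous_snd)
    fun_prop
  refine homotopic_sub _ _ (fun p => (blk (al (c p) * de (c p))
    (fun l => ((p.1 : ℝ) : ℂ) * Rl ((f p.2).1.1 0) ((f p.2).1.1 l.succ) 0) (rr (f p.2).1.1), (f p.2).1.2)) ?_ ?_ ?_ ?_ ?_
  · refine Continuous.prodMk (blk_continuous ?_ ?_ ?_) (hv.comp continuous_snd)
    · exact (al_continuous.comp hc).mul (de_continuous.comp hc)
    · refine continuous_pi fun l => Continuous.mul (by fun_prop) ?_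
      refine (continuous_apply 0).comp (Rl_continuous ?_ ?_)
      · exact (continuous_apply 0).comp (hA.comp continuous_snd)
      · exact (continuous_apply _).comp (hA.comp continuous_snd)
    · exact rr_continuous.comp (hA.comp continuous_snd)
  · rintro ⟨t, y⟩
    refine (f y).2.imp (fun h => ?_) id
    have h3 := Sl_star h.2 t
    exact blk_li (mul_ne_zero (al_ne h3) (de_ne h3)) _ (rr_li h.1 h.2)
  · intro y
    simp only [c, Set.Icc.coe_zero, sub_zero, one_smul, zero_smul, add_zero, al_e1, de_e1,
      Complex.ofReal_zero, zero_mul, mul_one]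
    rfl
  · intro y
    simp only [c, Set.Icc.coe_one, sub_self, one_smul, zero_smul, zero_add,
      Complex.ofReal_one, one_mul]
    rw [hMy]
    refine Prod.ext ?_ rfl
    funext l
    refine Fin.cases ?_ (fun l => ?_) l
    · simp only [Rl_self]; rfl
    · exact Fin.cons_self_tail _
  · intro t y hy
    obtain ⟨h1, h2⟩ := hb y hy
    have h3 : c (t, y) = e1 m := by
      simp only [c, h1, stab_zero]
      rw [← add_smul]; simp
    simp only [h3, al_e1, de_e1, h1, h2, rr_stab, stab_zero, Rl_e1, stab_succ, Fin.cons_zero]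
    simp only [mul_one, mul_zero]
    rfl

/-- One step of column reduction. -/
theorem reduce (D : Set V) (hD : IsClosed D) {d : ℕ} (hT : Thin D d) (j : ℕ)
    (hj : j + 2 + d ≤ 2 * m + Module.finrank ℝ V) (x : Wd m n D) :
    PiIso j (Wd m n D) x j (Wd (m + 1) (n + 1) D) (stabW D x) := by
  have hZ : Wd (m + 1) (n + 1) D \ Wz m n D ⊆ {A : Col (m + 1) (n + 1) | A 0 ∉ Sl m} ×ˢ D := by
    rintro ⟨A, v⟩ ⟨h1, h2⟩
    have hv : v ∈ D := by by_contra h; exact h2 (Or.inr h)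
    have hA : LinearIndependent ℂ A := h1.resolve_right (fun h => h hv)
    exact ⟨fun h => h2 (Or.inl ⟨hA, h⟩), hv⟩
  have hdim : j + 1 + 1 + (1 + 2 * (n * (m + 1)) + d) <
      Module.finrank ℝ (Col (m + 1) (n + 1) × V) := by
    rw [Module.finrank_prod, finrank_col]
    nlinarith
  have hTZ := thin_slit m n hT
  have hincl : Set.inclusion (Wz_sub m n D) (stabZ D x) = stabW D x := rfl
  refine piIso_of_map (stabW D) (stabW_continuous D) rfl ?_ ?_
  · intro g
    obtain ⟨f, hf⟩ := gp_surj (isOpen_Wd hD) (isOpen_Wz hD) hZ hTZ (by omega) (Wz_sub m n D)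
      (stabZ D x) g
    exact ⟨gmap (rrW D) (rrW_continuous D) (rrW_stabZ D x) f,
      (homotopic_stab_rr D x f).trans hf⟩
  · intro f g hfg
    have h := gp_inj (isOpen_Wd hD) (isOpen_Wz hD) hZ hTZ hdim (Wz_sub m n D)
      (stabZ D x) (gmap (stabZ D) (stabZ_continuous D) rfl f)
      (gmap (stabZ D) (stabZ_continuous D) rfl g) hfg
    have h2 := gmap_homotopic (rrW D) (rrW_continuous D) (rrW_stabZ D x) h
    convert h2 using 1
    · ext t : 1; exact (rrW_stabZ D _).symm
    · ext t : 1; exact (rrW_stabZ D _).symm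

end Red

end TS

end Part11

section Part12
open scoped unitInterval Topology Topology.Homotopy ComplexConjugate
set_option linter.unusedSectionVars false
namespace TS

/-- Iterated stabilization. -/
def stabN {k : ℕ} : (q : ℕ) → Col k 1 → Col (k + q) (q + 1)
  | 0, v => v
  | q + 1, v => stab (stabN q v)

theorem stabN_li {k : ℕ} (q : ℕ) {v : Col k 1} (h : LinearIndependent ℂ v) :
    LinearIndependent ℂ (stabN q v) := by
  induction q with
  | zero => exact h
  | succ q ih => exact stab_li ih

theorem li_one {k : ℕ} (v : Col k 1) : LinearIndependent ℂ v ↔ v ≠ 0 := by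
  rw [linearIndependent_unique_iff, not_iff_not]
  constructor
  · intro h; funext i; rw [Subsingleton.elim i default, h]; rfl
  · intro h; rw [h]; rfl

theorem reduceN {V : Type} [NormedAddCommGroup V] [NormedSpace ℝ V] [FiniteDimensional ℝ V]
    (D : Set V) (hD : IsClosed D) {d : ℕ} (hT : Thin D d) (j k : ℕ)
    (hj : j + 2 + d ≤ 2 * k + Module.finrank ℝ V) (v : Col k 1) (y : V) (h : (v, y) ∈ Wd k 1 D)
    (q : ℕ) : ∃ h' : (stabN q v, y) ∈ Wd (k + q) (q + 1) D,
      PiIso j (Wd k 1 D) ⟨(v, y), h⟩ j (Wd (k + q) (q + 1) D) ⟨(stabN q v, y), h'⟩ := by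
  induction q with
  | zero => exact ⟨h, ⟨MulEquiv.refl _⟩⟩
  | succ q ih =>
    obtain ⟨h', e⟩ := ih
    exact ⟨_, e.trans (reduce (m := k + q) (n := q + 1) D hD hT j (by omega) ⟨(stabN q v, y), h'⟩)⟩

/-- Tuples with a vector. -/
def Xs {s : ℕ} (k q : Fin s → ℕ) (V : Type) [Zero V] :
    Set ((∀ i, Col (k i + q i) (q i + 1)) × V) :=
  {p | (∃ i, LinearIndependent ℂ (p.1 i)) ∨ p.2 ≠ 0}

theorem tuple_main (s : ℕ) : ∀ (k q : Fin s → ℕ) (V : Type) [NormedAddCommGroup V] [NormedSpace ℝ V]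
    [FiniteDimensional ℝ V] (v : ∀ i, Col (k i) 1) (y : V)
    (hx : ((fun i => stabN (q i) (v i)), y) ∈ Xs k q V) (hv : (∃ i, v i ≠ 0) ∨ y ≠ 0)
    (j : ℕ) (_ : j + 2 = 2 * (∑ i, k i) + Module.finrank ℝ V),
    Nonempty (HomotopyGroup (Fin (j + 1)) (Xs k q V) ⟨_, hx⟩ ≃* Multiplicative ℤ) := by
  induction s with
  | zero =>
    intro k q V _ _ _ v y hx hv j hj
    have hy : y ∈ ({0}ᶜ : Set V) := by
      rcases hv with ⟨i, -⟩ | h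
      · exact i.elim0
      · exact h
    obtain ⟨w⟩ := sphere j (E := V) (by simpa using hj.symm) ⟨y, hy⟩
    have : PiIso j (Xs k q V) ⟨_, hx⟩ j ({0}ᶜ : Set V) ⟨y, hy⟩ := by
      refine piIso_of_homeo ((Homeomorph.uniqueProd _ _).subtype
        (p := fun x => x ∈ Xs k q V) (q := fun x => x ∈ ({0}ᶜ : Set V)) ?_) ?_
      · rintro ⟨a, x⟩
        simp [Xs]
      · rfl
    obtain ⟨u⟩ := this
    exact ⟨u.trans w⟩
  | succ s ih =>
    intro k q V _ _ _ v y hx hv j hj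
    let k' : Fin s → ℕ := fun i => k i.succ
    let q' : Fin s → ℕ := fun i => q i.succ
    let R : Type := ∀ i : Fin s, Col (k' i + q' i) (q' i + 1)
    let D : Set (R × V) := {x : R | ∀ i, x i ∈ Dg (k' i + q' i) (q' i + 1)} ×ˢ {0}
    have hD : IsClosed D := by
      refine IsClosed.prod ?_ isClosed_singleton
      have : {x : R | ∀ i, x i ∈ Dg (k' i + q' i) (q' i + 1)} =
        ⋂ i, (fun x : R => x i) ⁻¹' Dg (k' i + q' i) (q' i + 1) := by ext; simp
      rw [this]
      exact isClosed_iInter fun i => (isClosed_Dg _ _).preimage (continuous_apply i)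
    have hT : Thin D (∑ i, (2 * (q' i * (k' i + q' i)) + 2 * q' i) + 0) :=
      Thin.prod (Thin.pi fun i => thin_Dg _ _) Thin.zero
    have hfin : Module.finrank ℝ (R × V) = ∑ i, (2 * ((q' i + 1) * (k' i + q' i))) + Module.finrank ℝ V := by
      rw [Module.finrank_prod]
      congr 1
      simp only [R]
      rw [Module.finrank_pi_fintype]
      exact Finset.sum_congr rfl fun i _ => finrank_col _ _
    have hsum : ∑ i, (2 * ((q' i + 1) * (k' i + q' i))) =
        ∑ i, (2 * (q' i * (k' i + q' i)) + 2 * q' i) + 2 * ∑ i, k' i := by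
      rw [Finset.mul_sum, ← Finset.sum_add_distrib]
      exact Finset.sum_congr rfl fun i _ => by ring
    have hk : ∑ i, k i = k 0 + ∑ i, k' i := Fin.sum_univ_succ k
    let y' : R × V := ((fun i => stabN (q' i) (v i.succ)), y)
    have hvy : (v 0, y') ∈ Wd (k 0) 1 D := by
      by_cases h0 : v 0 = 0
      · right
        rintro ⟨h1, h2⟩
        rcases hv with ⟨i, hi⟩ | h
        · revert hi
          refine Fin.cases ?_ (fun i => ?_) i
          · intro hi; exact hi h0
          · intro hi
            exact h1 i (stabN_li _ ((li_one _).2 hi))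
        · exact h h2
      · left; exact (li_one _).2 h0
    obtain ⟨h', e1⟩ := reduceN D hD hT j (k 0) (by rw [hfin, hsum]; omega) (v 0) y' hvy (q 0)
    have hmem : ∀ (r : R) (w : V), (r, w) ∉ D ↔ (∃ i, LinearIndependent ℂ (r i)) ∨ w ≠ 0 := by
      intro r w
      simp only [D, Set.mem_prod, Set.mem_ofPred_eq, Dg, Set.mem_singleton_iff, not_and_or,
        not_forall, not_not]
    let hom : (∀ i, Col (k i + q i) (q i + 1)) × V ≃ₜ Col (k 0 + q 0) (q 0 + 1) × (R × V) :=
      { toFun := fun p => (p.1 0, (fun i => p.1 i.succ, p.2))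
        invFun := fun p => (Fin.cons p.1 p.2.1, p.2.2)
        left_inv := fun p => by
          refine Prod.ext ?_ rfl
          exact Fin.cons_self_tail _
        right_inv := fun p => rfl
        continuous_toFun := by fun_prop
        continuous_invFun := by
          refine Continuous.prodMk ?_ (by fun_prop)
          refine continuous_pi fun i => ?_
          refine Fin.cases ?_ (fun i => ?_) i
          · simpa using continuous_fst
          · simp only [Fin.cons_succ]
            exact (continuous_apply i).comp (continuous_fst.comp continuous_snd) }
    have e0 : PiIso j (Xs k q V) ⟨_, hx⟩ j (Wd (k 0 + q 0) (q 0 + 1) D) ⟨_, h'⟩ := by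
      refine piIso_of_homeo (hom.subtype
        (p := fun x => x ∈ Xs k q V) (q := fun x => x ∈ Wd (k 0 + q 0) (q 0 + 1) D) ?_) ?_
      · rintro ⟨a, x⟩
        change _ ↔ LinearIndependent ℂ (a 0) ∨ (((fun i => a i.succ : R), x) : R × V) ∉ D
        rw [hmem, ← or_assoc]
        simp only [Xs, Set.mem_ofPred_eq]
        rw [Fin.exists_fin_succ]
      · rfl
    let hom2 : Col (k 0) 1 × (R × V) ≃ₜ R × (Col (k 0) 1 × V) :=
      { toFun := fun p => (p.2.1, (p.1, p.2.2))
        invFun := fun p => (p.2.1, (p.1, p.2.2))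
        left_inv := fun p => rfl
        right_inv := fun p => rfl
        continuous_toFun := by fun_prop
        continuous_invFun := by fun_prop }
    have hequiv : ∀ x, x ∈ Wd (k 0) 1 D ↔ hom2 x ∈ Xs k' q' (Col (k 0) 1 × V) := by
      rintro ⟨a, ⟨r, w⟩⟩
      change LinearIndependent ℂ a ∨ (r, w) ∉ D ↔ (∃ i, LinearIndependent ℂ (r i)) ∨ (a, w) ≠ 0
      rw [hmem, li_one, Ne, Ne, Ne, Prod.mk_eq_zero, not_and_or]
      tauto
    have hx' : (((fun i => stabN (q' i) (v i.succ)), (v 0, y)) : R × (Col (k 0) 1 × V)) ∈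
        Xs k' q' (Col (k 0) 1 × V) := (hequiv (v 0, y')).1 hvy
    have e2 : PiIso j (Wd (k 0) 1 D) ⟨_, hvy⟩ j (Xs k' q' (Col (k 0) 1 × V)) ⟨_, hx'⟩ :=
      piIso_of_homeo (hom2.subtype (p := fun x => x ∈ Wd (k 0) 1 D)
        (q := fun x => x ∈ Xs k' q' (Col (k 0) 1 × V)) hequiv) rfl
    have hv' : (∃ i, v (Fin.succ i) ≠ 0) ∨ (v 0, y) ≠ 0 := by
      rw [Ne, Prod.mk_eq_zero, not_and_or]
      rw [Fin.exists_fin_succ] at hv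
      tauto
    obtain ⟨w⟩ := ih k' q' (Col (k 0) 1 × V) (fun i => v i.succ) (v 0, y) hx' hv' j (by
      rw [hj, hk, Module.finrank_prod, finrank_col]; omega)
    obtain ⟨u⟩ := (e0.trans e1.symm).trans e2
    exact ⟨u.trans w⟩

end TS

end Part12

section Part13
open scoped unitInterval Topology Topology.Homotopy ComplexConjugate
set_option linter.unusedSectionVars false
namespace TS

theorem exists_aut {m n : ℕ} (x z : Col m n) (hx : LinearIndependent ℂ x)
    (hz : LinearIndependent ℂ z) : ∃ g : (Fin m → ℂ) ≃ₗ[ℂ] (Fin m → ℂ), ∀ l, g (x l) = z l := by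
  obtain ⟨g, hg⟩ := Submodule.exists_linearEquiv_restrict_eq
    ((Module.Basis.span hx).equiv (Module.Basis.span hz) (Equiv.refl _))
  refine ⟨g, fun l => ?_⟩
  have := hg (Module.Basis.span hx l)
  rw [Module.Basis.equiv_apply] at this
  simpa [Module.Basis.span_apply] using this.symm

/-- Tuples with a non degenerate entry. -/
def Ys {s : ℕ} (M N : Fin s → ℕ) : Set (∀ i, Col (M i) (N i)) := {p | ∃ i, LinearIndependent ℂ (p i)}

theorem li_aut {m n : ℕ} (g : (Fin m → ℂ) ≃ₗ[ℂ] (Fin m → ℂ)) (A : Col m n) :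
    LinearIndependent ℂ (fun l => g (A l)) ↔ LinearIndependent ℂ A :=
  LinearMap.linearIndependent_iff (g : (Fin m → ℂ) →ₗ[ℂ] (Fin m → ℂ)) (LinearEquiv.ker g)

theorem move_base {s : ℕ} (M N : Fin s → ℕ) (x z : Ys M N)
    (hz : ∀ i, LinearIndependent ℂ (z.1 i)) (a : ℕ) : PiIso a (Ys M N) x a (Ys M N) z := by
  have hg : ∀ i, ∃ g : (Fin (M i) → ℂ) ≃ₗ[ℂ] (Fin (M i) → ℂ), LinearIndependent ℂ (x.1 i) →
      ∀ l, g (x.1 i l) = z.1 i l := by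
    intro i
    by_cases h : LinearIndependent ℂ (x.1 i)
    · obtain ⟨g, hg⟩ := exists_aut _ _ h (hz i)
      exact ⟨g, fun _ => hg⟩
    · exact ⟨LinearEquiv.refl _ _, fun h' => (h h').elim⟩
  choose g hg using hg
  have hgc : ∀ i, Continuous (g i) := fun i =>
    LinearMap.continuous_of_finiteDimensional (g i : (Fin (M i) → ℂ) →ₗ[ℂ] (Fin (M i) → ℂ))
  have hgc' : ∀ i, Continuous (g i).symm := fun i =>
    LinearMap.continuous_of_finiteDimensional ((g i).symm : (Fin (M i) → ℂ) →ₗ[ℂ] (Fin (M i) → ℂ))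
  let h1 : (∀ i, Col (M i) (N i)) ≃ₜ (∀ i, Col (M i) (N i)) :=
    { toFun := fun p i l => g i (p i l)
      invFun := fun p i l => (g i).symm (p i l)
      left_inv := fun p => by simp
      right_inv := fun p => by simp
      continuous_toFun := continuous_pi fun i => continuous_pi fun l => (hgc i).comp
        ((continuous_apply l).comp (continuous_apply i))
      continuous_invFun := continuous_pi fun i => continuous_pi fun l => (hgc' i).comp
        ((continuous_apply l).comp (continuous_apply i)) }
  have hm1 : ∀ p, p ∈ Ys M N ↔ h1 p ∈ Ys M N := fun p =>
    exists_congr fun i => (li_aut (g i) (p i)).symm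
  let H1 := h1.subtype (p := fun p => p ∈ Ys M N) (q := fun p => p ∈ Ys M N) hm1
  obtain ⟨i0, hi0⟩ := x.2
  have hx0 : h1 x.1 i0 = z.1 i0 := funext fun l => hg i0 hi0 l
  obtain ⟨θ, hθ0, hθ1, -⟩ := exists_continuous_zero_one_of_isClosed (isClosed_Dg (M i0) (N i0))
    (isClosed_singleton (x := z.1 i0)) (by
      rw [Set.disjoint_singleton_right]; exact fun h => h (hz i0))
  let c : ∀ i, Col (M i) (N i) := fun i => z.1 i - h1 x.1 i
  have hc0 : c i0 = 0 := by simp only [c, hx0, sub_self]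
  let h2 : (∀ i, Col (M i) (N i)) ≃ₜ (∀ i, Col (M i) (N i)) :=
    { toFun := fun p i => p i + θ (p i0) • c i
      invFun := fun p i => p i - θ (p i0) • c i
      left_inv := fun p => by funext i; simp [hc0]
      right_inv := fun p => by funext i; simp [hc0]
      continuous_toFun := by fun_prop
      continuous_invFun := by fun_prop }
  have hm2 : ∀ p, p ∈ Ys M N ↔ h2 p ∈ Ys M N := by
    intro p
    have e0 : h2 p i0 = p i0 := by simp [h2, hc0]
    by_cases h : LinearIndependent ℂ (p i0)
    · exact iff_of_true ⟨i0, h⟩ ⟨i0, e0.symm ▸ h⟩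
    · have : θ (p i0) = 0 := hθ0 h
      have e : h2 p = p := by funext i; simp [h2, this]
      rw [e]
  let H2 := h2.subtype (p := fun p => p ∈ Ys M N) (q := fun p => p ∈ Ys M N) hm2
  refine piIso_of_homeo (H1.trans H2) (Subtype.ext ?_)
  change h2 (h1 x.1) = z.1
  have : θ (h1 x.1 i0) = 1 := by rw [hx0]; exact hθ1 rfl
  funext i
  simp only [h2, c, Homeomorph.homeomorph_mk_coe, Equiv.coe_fn_mk]
  rw [this]; simp

theorem rank_iff {m n : ℕ} (A : Matrix (Fin m) (Fin n) ℂ) :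
    A.rank = n ↔ LinearIndependent ℂ A.col := by
  rw [linearIndependent_iff_card_eq_finrank_span, Set.finrank, ← Matrix.rank_eq_finrank_span_cols,
    Fintype.card_fin, eq_comm]

theorem li_cast {m m' n : ℕ} (h : m' = m) (A : Col m n) :
    LinearIndependent ℂ (fun (l : Fin n) (a : Fin m') => A l (Fin.cast h a)) ↔ LinearIndependent ℂ A := by
  subst h; rfl

theorem final (m s : ℕ) (k : Fin s → ℕ)
    (hk : ∀ i, 1 ≤ k i) (hkm : ∀ i, k i ≤ m)
    (x : {A : (i : Fin s) → Matrix (Fin m) (Fin (m - k i + 1)) ℂ //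
        ∃ i, (A i).rank = m - k i + 1}) :
    Nonempty
      (HomotopyGroup (Fin (2 * (∑ i, k i) - 2 + 1))
          {A : (i : Fin s) → Matrix (Fin m) (Fin (m - k i + 1)) ℂ //
            ∃ i, (A i).rank = m - k i + 1} x
        ≃* Multiplicative ℤ) := by
  obtain ⟨i0, -⟩ := x.2
  let q : Fin s → ℕ := fun i => m - k i
  have hm : ∀ i, k i + q i = m := fun i => by have := hkm i; simp only [q]; omega
  let M : Fin s → ℕ := fun i => k i + q i
  let N : Fin s → ℕ := fun i => q i + 1
  let h1 : ((i : Fin s) → Matrix (Fin m) (Fin (m - k i + 1)) ℂ) ≃ₜ (∀ i, Col (M i) (N i)) :=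
    { toFun := fun A i l a => A i (Fin.cast (hm i) a) l
      invFun := fun p i a l => p i l (Fin.cast (hm i).symm a)
      left_inv := fun p => rfl
      right_inv := fun p => rfl
      continuous_toFun := continuous_pi fun i => continuous_pi fun l => continuous_pi fun a =>
        (continuous_apply l).comp ((continuous_apply _).comp (continuous_apply i))
      continuous_invFun := continuous_pi fun i => continuous_pi fun a => continuous_pi fun l =>
        (continuous_apply _).comp ((continuous_apply l).comp (continuous_apply i)) }
  have hm1 : ∀ A, (∃ i, (A i).rank = m - k i + 1) ↔ h1 A ∈ Ys M N := by
    intro A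
    refine exists_congr fun i => ?_
    rw [rank_iff]
    exact (li_cast (hm i) (A i).col).symm
  let H1 := h1.subtype (p := fun A => ∃ i, (A i).rank = m - k i + 1) (q := fun p => p ∈ Ys M N) hm1
  let v : ∀ i, Col (k i) 1 := fun i _ _ => 1
  have hv : ∀ i, v i ≠ 0 := fun i h => one_ne_zero (congrFun (congrFun h 0) ⟨0, hk i⟩)
  have hvl : ∀ i, LinearIndependent ℂ (stabN (q i) (v i)) := fun i => stabN_li _ ((li_one _).2 (hv i))
  let z : Ys M N := ⟨fun i => stabN (q i) (v i), i0, hvl i0⟩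
  let V := Fin 0 → ℝ
  have hx : ((fun i => stabN (q i) (v i)), (0 : V)) ∈ Xs k q V := Or.inl ⟨i0, hvl i0⟩
  have hsum : 1 ≤ ∑ i, k i := (hk i0).trans (Finset.single_le_sum (f := k) (fun _ _ => Nat.zero_le _) (Finset.mem_univ i0))
  obtain ⟨w⟩ := tuple_main s k q V v 0 hx (Or.inl ⟨i0, hv i0⟩) (2 * (∑ i, k i) - 2) (by simp [V]; omega)
  have e3 : PiIso (2 * (∑ i, k i) - 2) (Xs k q V) ⟨_, hx⟩ (2 * (∑ i, k i) - 2) (Ys M N) z := by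
    refine piIso_of_homeo ((Homeomorph.prodUnique _ _).subtype
      (p := fun x => x ∈ Xs k q V) (q := fun x => x ∈ Ys M N) ?_) rfl
    rintro ⟨p, u⟩
    have : u = 0 := Subsingleton.elim _ _
    simp only [Xs, Set.mem_ofPred_eq, this, ne_eq, not_true_eq_false, or_false]
    rfl
  obtain ⟨u⟩ := ((piIso_of_homeo (a := 2 * (∑ i, k i) - 2) H1 (x := x) rfl).trans
    (move_base M N (H1 x) z hvl _)).trans e3.symm
  exact ⟨u.trans w⟩

end TS

end Part13

/-- For `m ≥ 1` and positive integers `k₁, …, k_s ≤ m` with `k = Σ kᵢ`,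
the homotopy group `π_{2k-1}` of the space `W_{m,𝐤}` of tuples `(A₁, …, A_s)` of complex
matrices, `Aᵢ` of size `m × (m - kᵢ + 1)`, such that some `Aᵢ` has full rank
`m - kᵢ + 1`, at any basepoint, is isomorphic to `ℤ`.
(The degree `2k - 1` is written `2k - 2 + 1`, which agrees with it since `k ≥ 1`
whenever the space is nonempty.) -/
theorem tupleStiefel_homotopyGroup_int (m s : ℕ) (hm : 1 ≤ m) (k : Fin s → ℕ)
    (hk : ∀ i, 1 ≤ k i) (hkm : ∀ i, k i ≤ m)
    (x : {A : (i : Fin s) → Matrix (Fin m) (Fin (m - k i + 1)) ℂ //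
        ∃ i, (A i).rank = m - k i + 1}) :
    Nonempty
      (HomotopyGroup (Fin (2 * (∑ i, k i) - 2 + 1))
          {A : (i : Fin s) → Matrix (Fin m) (Fin (m - k i + 1)) ℂ //
            ∃ i, (A i).rank = m - k i + 1} x
        ≃* Multiplicative ℤ) := by
  exact TS.final m s k hk hkm x
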